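/- arXiv:1201.4468 — 5 statements merged into one kernel-verified Lean document; each statement's English description precedes it below -/
import Mathlib

section
/- Let ω be a Sturmian infinite word. Then every factor u of ω has exactly two distinct return words in ω. -/
/-- `w_k` equals `⌊(k+1)α+ρ⌋ - ⌊kα+ρ⌋` for all `k < |w|` (letter `true` stands for `1`). -/
def DefinesWord (α ρ : ℝ) (w : List Bool) : Prop :=
  ∀ k : ℕ, (h : k < w.length) →
    (if w.get ⟨k, h⟩ then (1 : ℤ) else 0) = ⌊((k : ℝ) + 1) * α + ρ⌋ - ⌊(k : ℝ) * α + ρ⌋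

/-- A finite Sturmian word. -/
def IsFiniteSturmian (w : List Bool) : Prop :=
  ∃ α ρ : ℝ, α ∈ Set.Ioo (0 : ℝ) 1 ∧ ρ ∈ Set.Ioo (0 : ℝ) 1 ∧ DefinesWord α ρ w

/-- `A n`, the set of finite Sturmian words of length `n`. -/
def sturmianWords (n : ℕ) : Set (List Bool) :=
  {w | w.length = n ∧ IsFiniteSturmian w}

/-- `(i,j)` is an integer point of the line `y = αx + ρ` (here `l = (α,ρ)`). -/
def IsIntegerPoint (l : ℝ × ℝ) (p : ℤ × ℤ) : Prop :=
  (p.2 : ℝ) = l.1 * p.1 + l.2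

/-- `Z_k(ℓ)`: the number of integer points `(i,j)` of `ℓ` with `0 ≤ i ≤ k`. -/
noncomputable def Zpts (k : ℝ) (l : ℝ × ℝ) : ℕ :=
  {p : ℤ × ℤ | 0 ≤ p.1 ∧ (p.1 : ℝ) ≤ k ∧ IsIntegerPoint l p}.ncard

/-- The set `S_n` of lines `(α,ρ)` with `α, ρ ∈ (0,1)`. -/
def Sset : Set (ℝ × ℝ) := Set.Ioo 0 1 ×ˢ Set.Ioo 0 1

/-- The set `L_n` of lines `(α,ρ)` with `α, ρ ∈ [0,1]` and `Z_n(ℓ) ≥ 2`. -/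
def Lset (n : ℕ) : Set (ℝ × ℝ) :=
  {l | l.1 ∈ Set.Icc (0 : ℝ) 1 ∧ l.2 ∈ Set.Icc (0 : ℝ) 1 ∧ 2 ≤ Zpts n l}

/-- The set `m(ℓ) ⊆ A_n`. -/
def mImage (n : ℕ) (l : ℝ × ℝ) : Set (List Bool) :=
  {w | w ∈ sturmianWords n ∧ ∃ l' : ℝ × ℝ, l' ∈ Sset ∧ DefinesWord l'.1 l'.2 w ∧
    (¬ ∃ p : ℤ × ℤ, 0 ≤ p.1 ∧ (p.1 : ℝ) ≤ n ∧
        min (l.1 * p.1 + l.2) (l'.1 * p.1 + l'.2) < (p.2 : ℝ) ∧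
        (p.2 : ℝ) < max (l.1 * p.1 + l.2) (l'.1 * p.1 + l'.2)) ∧
    (∃ p1 p2 : ℤ × ℤ, IsIntegerPoint l p1 ∧ IsIntegerPoint l p2 ∧
      0 ≤ p1.1 ∧ (p1.1 : ℝ) ≤ n / 2 ∧ (n / 2 : ℝ) < (p2.1 : ℝ) ∧ (p2.1 : ℝ) ≤ n ∧
      (p1.2 : ℝ) < l'.1 * p1.1 + l'.2 ∧ (p2.2 : ℝ) < l'.1 * p2.1 + l'.2)}

/-- The word `w` goes through the grid point `p = (i,j)`:
exactly `j` of the first `i` letters of `w` equal `1`. -/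
def GoesThrough (w : List Bool) (p : ℤ × ℤ) : Prop :=
  ((w.take p.1.toNat).count true : ℤ) = p.2

/-- The word `u` occurs in the infinite word `ω` at position `i`. -/
def OccursAt (u : List Bool) (ω : ℕ → Bool) (i : ℕ) : Prop :=
  ∀ k : ℕ, (h : k < u.length) → u.get ⟨k, h⟩ = ω (i + k)

/-- `u` is a factor of the infinite word `ω`. -/
def IsFactor (u : List Bool) (ω : ℕ → Bool) : Prop := ∃ i, OccursAt u ω i

/-- `ω` is a Sturmian infinite word: it has exactly `n+1` factors of length `n` for all `n`. -/
def IsSturmian (ω : ℕ → Bool) : Prop :=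
  ∀ n : ℕ, {u : List Bool | u.length = n ∧ IsFactor u ω}.ncard = n + 1

/-- `v` is a return word of `u` in `ω`. -/
def IsReturnWord (ω : ℕ → Bool) (u v : List Bool) : Prop :=
  v ≠ [] ∧ IsFactor (v ++ u) ω ∧ u <+: v ++ u ∧ u <:+ v ++ u ∧
    {i : ℕ | i + u.length ≤ (v ++ u).length ∧ u <+: (v ++ u).drop i}.ncard = 2

/-- The factor of length `n` of `w` starting at position `i`. -/
def factorAt (w : ℕ → Bool) (n i : ℕ) : List Bool := (List.range n).map fun t => w (i + t)

/-- The set of factors of length `n` of `w`. -/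
def factorSet (w : ℕ → Bool) (n : ℕ) : Set (List Bool) := Set.range (factorAt w n)

/-- The set of right special factors of length `n` of `w`. -/
def rightSpecial (w : ℕ → Bool) (n : ℕ) : Set (List Bool) :=
  {f | f ++ [true] ∈ factorSet w (n + 1) ∧ f ++ [false] ∈ factorSet w (n + 1)}

@[simp]
theorem length_factorAt (w : ℕ → Bool) (n i : ℕ) : (factorAt w n i).length = n := by
  simp [factorAt]

theorem factorAt_eq_iff {w : ℕ → Bool} {n i j : ℕ} :
    factorAt w n i = factorAt w n j ↔ ∀ t < n, w (i + t) = w (j + t) := by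
  simp [factorAt]

theorem factorAt_succ (w : ℕ → Bool) (n i : ℕ) :
    factorAt w (n + 1) i = factorAt w n i ++ [w (i + n)] := by
  simp [factorAt, List.range_succ]

theorem factorAt_add (w : ℕ → Bool) (m n i : ℕ) :
    factorAt w (m + n) i = factorAt w m i ++ factorAt w n (i + m) := by
  simp [factorAt, List.range_add, Function.comp_def, add_assoc]

theorem occursAt_iff {w : ℕ → Bool} {u : List Bool} {i : ℕ} :
    OccursAt u w i ↔ u = factorAt w u.length i := by
  constructor
  · intro h
    apply List.ext_getElem (by simp)
    intro k h1 h2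
    simpa [factorAt] using h k h1
  · intro h k hk
    have := List.getElem_of_eq h hk
    simpa [factorAt] using this

theorem setOf_isFactor_eq (w : ℕ → Bool) (n : ℕ) :
    {u : List Bool | u.length = n ∧ IsFactor u w} = factorSet w n := by
  ext u
  constructor
  · rintro ⟨rfl, i, hi⟩
    exact ⟨i, (occursAt_iff.1 hi).symm⟩
  · rintro ⟨i, rfl⟩
    exact ⟨by simp, i, occursAt_iff.2 (by simp)⟩

theorem factorSet_finite (w : ℕ → Bool) (n : ℕ) : (factorSet w n).Finite := by
  apply (List.finite_length_eq Bool n).subset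
  rintro _ ⟨i, rfl⟩
  simp

theorem rightSpecial_subset (w : ℕ → Bool) (n : ℕ) : rightSpecial w n ⊆ factorSet w n := by
  rintro f ⟨⟨i, hi⟩, -⟩
  rw [factorAt_succ] at hi
  exact ⟨i, (List.append_inj' hi rfl).1⟩

/-- The first difference of the complexity function counts the right special factors. -/
theorem ncard_factorSet_succ (w : ℕ → Bool) (n : ℕ) :
    (factorSet w (n + 1)).ncard = (factorSet w n).ncard + (rightSpecial w n).ncard := by
  let E (b : Bool) : Set (List Bool) := {f | f ++ [b] ∈ factorSet w (n + 1)}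
  have hinj (b : Bool) : Function.Injective (fun f : List Bool => f ++ [b]) :=
    fun f g h => (List.append_inj' h rfl).1
  have hsub (b : Bool) : E b ⊆ factorSet w n := by
    rintro f ⟨i, hi⟩
    rw [factorAt_succ] at hi
    exact ⟨i, (List.append_inj' hi rfl).1⟩
  have hfin (b : Bool) : (E b).Finite := (factorSet_finite w n).subset (hsub b)
  have hunion : E true ∪ E false = factorSet w n := by
    apply Set.Subset.antisymm (Set.union_subset (hsub _) (hsub _))
    rintro _ ⟨i, rfl⟩
    rcases hb : w (i + n) with _ | _
    · exact Or.inr ⟨i, by rw [factorAt_succ, hb]⟩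
    · exact Or.inl ⟨i, by rw [factorAt_succ, hb]⟩
  have hsplit : factorSet w (n + 1) = (· ++ [true]) '' E true ∪ (· ++ [false]) '' E false := by
    apply Set.Subset.antisymm
    · rintro _ ⟨i, rfl⟩
      rcases hb : w (i + n) with _ | _
      · exact Or.inr ⟨factorAt w n i, ⟨i, by rw [factorAt_succ, hb]⟩, by
          simp [factorAt_succ, hb]⟩
      · exact Or.inl ⟨factorAt w n i, ⟨i, by rw [factorAt_succ, hb]⟩, by
          simp [factorAt_succ, hb]⟩
    · rintro _ (⟨f, hf, rfl⟩ | ⟨f, hf, rfl⟩) <;> exact hf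
  have hdisj : Disjoint ((· ++ [true]) '' E true) ((· ++ [false]) '' E false) := by
    rw [Set.disjoint_left]
    rintro _ ⟨f, -, rfl⟩ ⟨g, -, h⟩
    simpa using (List.append_inj' h rfl).2
  rw [hsplit, Set.ncard_union_eq hdisj ((hfin _).image _) ((hfin _).image _),
    Set.ncard_image_of_injective _ (hinj _), Set.ncard_image_of_injective _ (hinj _),
    ← Set.ncard_union_add_ncard_inter _ _ (hfin _) (hfin _), hunion]
  rfl

theorem factorAt_mem_rightSpecial {w : ℕ → Bool} {n i j : ℕ}
    (h : factorAt w n i = factorAt w n j) (hne : w (i + n) ≠ w (j + n)) :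
    factorAt w n i ∈ rightSpecial w n := by
  have hi : factorAt w n i ++ [w (i + n)] ∈ factorSet w (n + 1) := ⟨i, factorAt_succ w n i⟩
  have hj : factorAt w n i ++ [w (j + n)] ∈ factorSet w (n + 1) := by
    rw [h]
    exact ⟨j, factorAt_succ w n j⟩
  rcases h1 : w (i + n) with _ | _ <;> rcases h2 : w (j + n) with _ | _ <;>
    simp_all [rightSpecial]

theorem IsSturmian.ncard_factorSet {w : ℕ → Bool} (hw : IsSturmian w) (n : ℕ) :
    (factorSet w n).ncard = n + 1 := by
  rw [← setOf_isFactor_eq]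
  exact hw n

theorem IsSturmian.rightSpecial_unique {w : ℕ → Bool} (hw : IsSturmian w) {n : ℕ}
    {f g : List Bool} (hf : f ∈ rightSpecial w n) (hg : g ∈ rightSpecial w n) : f = g := by
  have h := ncard_factorSet_succ w n
  rw [hw.ncard_factorSet, hw.ncard_factorSet] at h
  obtain ⟨a, ha⟩ := Set.ncard_eq_one.1 (show (rightSpecial w n).ncard = 1 by omega)
  rw [ha] at hf hg
  exact hf.trans hg.symm

/-- A Sturmian word is not eventually periodic. -/
theorem IsSturmian.exists_ne {w : ℕ → Bool} (hw : IsSturmian w) {i j : ℕ} (hij : i < j) :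
    ∃ t, w (i + t) ≠ w (j + t) := by
  by_contra! h
  have key : ∀ k, ∃ l < j, factorAt w j k = factorAt w j l := by
    intro k
    induction k using Nat.strong_induction_on with
    | _ k ih =>
      by_cases hk : k < j
      · exact ⟨k, hk, rfl⟩
      · obtain ⟨l, hl, e⟩ := ih (k - (j - i)) (by omega)
        refine ⟨l, hl, ?_⟩
        rw [← e, factorAt_eq_iff]
        intro t _
        have := h (k - j + t)
        rw [show i + (k - j + t) = k - (j - i) + t by omega,
          show j + (k - j + t) = k + t by omega] at this
        exact this.symm
  have hsub : factorSet w j ⊆ factorAt w j '' Set.Iio j := by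
    rintro _ ⟨k, rfl⟩
    obtain ⟨l, hl, e⟩ := key k
    exact ⟨l, hl, e.symm⟩
  have h1 := Set.ncard_le_ncard hsub ((Set.finite_Iio j).image _)
  have h2 := Set.ncard_image_le (f := factorAt w j) (Set.finite_Iio j)
  have h3 : (Set.Iio j).ncard = j := by simp [Set.ncard_eq_toFinset_card']
  rw [hw.ncard_factorSet] at h1
  omega

/-- Every factor of a Sturmian word occurs at arbitrarily large positions. -/
theorem IsSturmian.recurrent {w : ℕ → Bool} (hw : IsSturmian w) (n i K : ℕ) :
    ∃ j, K ≤ j ∧ factorAt w n j = factorAt w n i := by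
  by_contra! h
  let w' : ℕ → Bool := fun t => w (K + t)
  have hshift (m j : ℕ) : factorAt w' m j = factorAt w m (K + j) := by
    simp [factorAt, w', add_assoc]
  have hlt : (factorSet w' n).ncard < n + 1 := by
    rw [← hw.ncard_factorSet n]
    apply Set.ncard_lt_ncard _ (factorSet_finite w n)
    refine ⟨?_, fun hs => ?_⟩
    · rintro _ ⟨j, rfl⟩
      exact ⟨K + j, (hshift n j).symm⟩
    · obtain ⟨j, hj⟩ := hs ⟨i, rfl⟩
      exact h (K + j) (by omega) (by rw [← hj, hshift])
  obtain ⟨m, hm⟩ : ∃ m, rightSpecial w' m = ∅ := by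
    by_contra! hne
    have hge : ∀ m, m + 1 ≤ (factorSet w' m).ncard := by
      intro m
      induction m with
      | zero => exact (Set.ncard_pos (factorSet_finite w' 0)).2 ⟨_, 0, rfl⟩
      | succ m ih =>
        have := (Set.ncard_pos ((factorSet_finite w' m).subset (rightSpecial_subset w' m))).2
          (hne m)
        rw [ncard_factorSet_succ]
        omega
    have := hge n
    omega
  have hdet : ∀ a b, factorAt w' m a = factorAt w' m b → w' (a + m) = w' (b + m) := by
    intro a b hab
    by_contra hne
    have := factorAt_mem_rightSpecial hab hne
    simp [hm] at this
  have hforever : ∀ a b, factorAt w' m a = factorAt w' m b →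
      ∀ t, factorAt w' (m + t) a = factorAt w' (m + t) b := by
    intro a b hab t
    induction t with
    | zero => exact hab
    | succ t ih =>
      have hs : factorAt w' m (a + t) = factorAt w' m (b + t) := by
        rw [add_comm m t, factorAt_add, factorAt_add] at ih
        exact (List.append_inj ih (by simp)).2
      have := hdet _ _ hs
      rw [← add_assoc, factorAt_succ, factorAt_succ, ih,
        show a + (m + t) = a + t + m by ring, show b + (m + t) = b + t + m by ring, this]
  obtain ⟨a, -, b, -, hab, e⟩ := Set.infinite_univ.exists_ne_map_eq_of_mapsTo
    (f := factorAt w' m) (t := factorSet w' m) (fun a _ => ⟨a, rfl⟩) (factorSet_finite w' m)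
  have hcontra : ∀ a b, a < b → factorAt w' m a = factorAt w' m b → False := by
    intro a b hab e
    obtain ⟨t, ht⟩ := hw.exists_ne (show K + a < K + b by omega)
    have := factorAt_eq_iff.1 (hforever a b e (t + 1)) t (by omega)
    exact ht (by simpa [w', add_assoc] using this)
  rcases lt_or_gt_of_ne hab with hab | hab
  · exact hcontra a b hab e
  · exact hcontra b a hab e.symm

/-- `i` and `i + d` are consecutive occurrences of `u` in `w`. -/
def ConsecutiveOccurrences (w : ℕ → Bool) (u : List Bool) (i d : ℕ) : Prop :=
  0 < d ∧ OccursAt u w i ∧ OccursAt u w (i + d) ∧ ∀ k, 0 < k → k < d → ¬ OccursAt u w (i + k)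

theorem prefix_drop_factorAt_iff {w : ℕ → Bool} {u : List Bool} {i d k : ℕ} (hk : k ≤ d) :
    u <+: (factorAt w (d + u.length) i).drop k ↔ OccursAt u w (i + k) := by
  obtain ⟨e, rfl⟩ := Nat.exists_eq_add_of_le hk
  rw [occursAt_iff, show k + e + u.length = k + (u.length + e) by ring, factorAt_add,
    List.drop_left' (by simp), factorAt_add, List.prefix_iff_eq_take, List.take_left' (by simp)]

theorem isReturnWord_iff {w : ℕ → Bool} {u v : List Bool} :
    IsReturnWord w u v ↔ ∃ i d, ConsecutiveOccurrences w u i d ∧ v = factorAt w d i := by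
  have hset (i d : ℕ) :
      {k : ℕ | k + u.length ≤ (factorAt w (d + u.length) i).length ∧
        u <+: (factorAt w (d + u.length) i).drop k} = {k | k ≤ d ∧ OccursAt u w (i + k)} := by
    ext k
    simp only [length_factorAt, Set.mem_ofPred_eq, add_le_add_iff_right]
    exact and_congr_right fun hk => prefix_drop_factorAt_iff hk
  constructor
  · rintro ⟨hv, ⟨i, hi⟩, hpre, -, hcard⟩
    rw [occursAt_iff, List.length_append] at hi
    have hi' := hi
    rw [factorAt_add] at hi'
    obtain ⟨e1, e2⟩ := List.append_inj hi' (by simp)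
    rw [hi, hset] at hcard
    rw [hi] at hpre
    have hd : 0 < v.length := List.length_pos_iff.2 hv
    have h0 : OccursAt u w i := (prefix_drop_factorAt_iff (k := 0) (Nat.zero_le v.length)).1 hpre
    have hend : OccursAt u w (i + v.length) := occursAt_iff.2 e2
    refine ⟨i, v.length, ⟨hd, h0, hend, fun k hk hkd ho => ?_⟩, e1⟩
    have hsub : ({0, k, v.length} : Set ℕ) ⊆ {k | k ≤ v.length ∧ OccursAt u w (i + k)} := by
      rintro x (rfl | rfl | rfl)
      · exact ⟨by omega, h0⟩
      · exact ⟨hkd.le, ho⟩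
      · exact ⟨le_rfl, hend⟩
    have hle := Set.ncard_le_ncard hsub ((Set.finite_Iic v.length).subset fun x hx => hx.1)
    rw [hcard, Set.ncard_eq_three.2 ⟨0, k, v.length, by omega, by omega, by omega, rfl⟩] at hle
    omega
  · rintro ⟨i, d, ⟨hd, h0, hend, hmid⟩, rfl⟩
    have happ : factorAt w d i ++ u = factorAt w (d + u.length) i := by
      rw [factorAt_add, ← occursAt_iff.1 hend]
    refine ⟨?_, ⟨i, ?_⟩, ?_, List.suffix_append _ _, ?_⟩
    · intro h
      have := congrArg List.length h
      simp at this
      omega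
    · rw [occursAt_iff, happ, length_factorAt]
    · rw [happ]
      exact (prefix_drop_factorAt_iff (k := 0) (Nat.zero_le d)).2 h0
    · rw [happ, hset, Set.ncard_eq_two]
      refine ⟨0, d, by omega, ?_⟩
      ext k
      constructor
      · rintro ⟨hk, ho⟩
        by_contra hne
        simp only [Set.mem_insert_iff, Set.mem_singleton_iff, not_or] at hne
        exact hmid k (by omega) (by omega) ho
      · rintro (rfl | rfl)
        · exact ⟨by omega, h0⟩
        · exact ⟨le_rfl, hend⟩

theorem IsSturmian.exists_consecutiveOccurrences {w : ℕ → Bool} (hw : IsSturmian w)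
    {u : List Bool} {i : ℕ} (hi : OccursAt u w i) : ∃ d, ConsecutiveOccurrences w u i d := by
  classical
  have hex : ∃ d, 0 < d ∧ OccursAt u w (i + d) := by
    obtain ⟨j, hj, e⟩ := hw.recurrent u.length i (i + 1)
    refine ⟨j - i, by omega, ?_⟩
    rw [show i + (j - i) = j by omega, occursAt_iff, e]
    exact occursAt_iff.1 hi
  refine ⟨Nat.find hex, (Nat.find_spec hex).1, hi, (Nat.find_spec hex).2, fun k hk hkd ho => ?_⟩
  exact Nat.find_min hex hkd ⟨hk, ho⟩

/-- The occurrences of a factor `u` of a Sturmian word are the occurrences of a right special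
factor having `u` as a prefix. -/
theorem IsSturmian.exists_rightSpecial_extension {w : ℕ → Bool} (hw : IsSturmian w)
    {u : List Bool} (hu : IsFactor u w) :
    ∃ N, u.length ≤ N ∧
      (∀ i j, OccursAt u w i → OccursAt u w j → factorAt w N i = factorAt w N j) ∧
      ∃ i j, OccursAt u w i ∧ OccursAt u w j ∧ w (i + N) ≠ w (j + N) := by
  classical
  obtain ⟨i₀, h₀⟩ := hu
  have hex : ∃ N, ∃ i j, OccursAt u w i ∧ OccursAt u w j ∧ w (i + N) ≠ w (j + N) := by
    obtain ⟨d, hd, -, h1, -⟩ := hw.exists_consecutiveOccurrences h₀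
    obtain ⟨t, ht⟩ := hw.exists_ne (show i₀ < i₀ + d by omega)
    exact ⟨t, i₀, i₀ + d, h₀, h1, ht⟩
  have hmin : ∀ t < Nat.find hex, ∀ i j, OccursAt u w i → OccursAt u w j →
      w (i + t) = w (j + t) := by
    intro t ht i j hi hj
    by_contra hne
    exact Nat.find_min hex ht ⟨i, j, hi, hj, hne⟩
  refine ⟨Nat.find hex, ?_, fun i j hi hj => factorAt_eq_iff.2 fun t ht => hmin t ht i j hi hj,
    Nat.find_spec hex⟩
  by_contra! hlt
  obtain ⟨i, j, hi, hj, hne⟩ := Nat.find_spec hex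
  exact hne ((hi _ hlt).symm.trans (hj _ hlt))

/-- If the occurrences of `u` are those of a right special factor of length `N`, the letter
following that factor determines the return word. -/
theorem IsSturmian.factorAt_eq_of_next_eq {w : ℕ → Bool} (hw : IsSturmian w) {u : List Bool}
    {N i j d : ℕ} (hN : u.length ≤ N)
    (hagree : ∀ i j, OccursAt u w i → OccursAt u w j → factorAt w N i = factorAt w N j)
    (hspecial : ∃ i j, OccursAt u w i ∧ OccursAt u w j ∧ w (i + N) ≠ w (j + N))
    (hi : ConsecutiveOccurrences w u i d) (hj : OccursAt u w j)
    (hnext : w (i + N) = w (j + N)) : factorAt w (N + d) i = factorAt w (N + d) j := by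
  obtain ⟨hd, hi0, -, hmid⟩ := hi
  obtain ⟨a, b, ha, hb, hab⟩ := hspecial
  have hrs := factorAt_mem_rightSpecial (hagree a b ha hb) hab
  have key : ∀ t ≤ d, factorAt w (N + t) i = factorAt w (N + t) j := by
    intro t
    induction t with
    | zero => exact fun _ => hagree i j hi0 hj
    | succ t ih =>
      intro ht
      have e := ih (by omega)
      suffices h : w (i + (N + t)) = w (j + (N + t)) by
        rw [← add_assoc, factorAt_succ, factorAt_succ, e, h]
      rcases Nat.eq_zero_or_pos t with rfl | htpos
      · exact hnext
      by_contra hne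
      have hs : factorAt w N (i + t) = factorAt w N (j + t) := by
        rw [add_comm N t, factorAt_add, factorAt_add] at e
        exact (List.append_inj e (by simp)).2
      have hmem := factorAt_mem_rightSpecial hs
        (by rwa [show i + t + N = i + (N + t) by ring, show j + t + N = j + (N + t) by ring])
      have heq := factorAt_eq_iff.1 (hw.rightSpecial_unique hmem hrs)
      exact hmid t htpos (by omega) fun k hk => (ha k hk).trans (heq k (by omega)).symm
  exact key d le_rfl

theorem OccursAt.congr {w : ℕ → Bool} {u : List Bool} {m i j k : ℕ}
    (h : factorAt w m i = factorAt w m j) (hk : k + u.length ≤ m) (ho : OccursAt u w (i + k)) :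
    OccursAt u w (j + k) := by
  intro t ht
  rw [ho t ht, add_assoc, add_assoc]
  exact factorAt_eq_iff.1 h _ (by omega)

/-- Every factor of a Sturmian infinite word has exactly two return words. -/
theorem two_return_words (ω : ℕ → Bool) (hω : IsSturmian ω) (u : List Bool)
    (hu : IsFactor u ω) :
    {v : List Bool | IsReturnWord ω u v}.ncard = 2 := by
  obtain ⟨N, hN, hagree, hspecial⟩ := hω.exists_rightSpecial_extension hu
  have hsame : ∀ i j d e, ConsecutiveOccurrences ω u i d → ConsecutiveOccurrences ω u j e →
      ω (i + N) = ω (j + N) → factorAt ω d i = factorAt ω e j := by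
    intro i j d e hi hj hnext
    have h1 := hω.factorAt_eq_of_next_eq hN hagree hspecial hi hj.2.1 hnext
    have h2 := hω.factorAt_eq_of_next_eq hN hagree hspecial hj hi.2.1 hnext.symm
    have hde : e ≤ d := by
      by_contra! hlt
      exact hj.2.2.2 d hi.1 hlt (hi.2.2.1.congr h1 (by omega))
    have hed : d ≤ e := by
      by_contra! hlt
      exact hi.2.2.2 e hj.1 hlt (hj.2.2.1.congr h2 (by omega))
    obtain rfl := le_antisymm hde hed
    exact factorAt_eq_iff.2 fun t ht => factorAt_eq_iff.1 h1 t (by omega)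
  obtain ⟨a, b, ha, hb, hab⟩ := hspecial
  obtain ⟨d, hd⟩ := hω.exists_consecutiveOccurrences ha
  obtain ⟨e, he⟩ := hω.exists_consecutiveOccurrences hb
  rw [Set.ncard_eq_two]
  refine ⟨factorAt ω d a, factorAt ω e b, fun heq => hab ?_, ?_⟩
  · obtain rfl : d = e := by simpa using congrArg List.length heq
    have hfull : factorAt ω (d + N) a = factorAt ω (d + N) b := by
      rw [factorAt_add, factorAt_add, heq, hagree _ _ hd.2.2.1 he.2.2.1]
    have := hd.1
    exact factorAt_eq_iff.1 hfull N (by omega)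
  · ext v
    rw [Set.mem_ofPred_eq, isReturnWord_iff]
    constructor
    · rintro ⟨i, f, hf, rfl⟩
      by_cases h : ω (i + N) = ω (a + N)
      · exact Or.inl (hsame _ _ _ _ hf hd h)
      · refine Or.inr (hsame _ _ _ _ hf he ?_)
        rw [Bool.eq_not_of_ne h, Bool.eq_not_of_ne hab.symm]
    · rintro (rfl | rfl)
      · exact ⟨a, d, hd, rfl⟩
      · exact ⟨b, e, he, rfl⟩
end

section
/- Let w be a finite Sturmian word. Then there exist a finite Sturmian word w' of some length n' having w as a prefix and a line ℓ' ∈ L_{n'} such that w' ∈ m(ℓ') and w' goes through every integer point (i,j) of ℓ' satisfying 0 ≤ i ≤ n'. -/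
/-- Right-continuity of the floor, uniformly over `0 ≤ k ≤ n`. -/
theorem exists_pos_forall_add_lt_floor_add_one (α ρ : ℝ) (n : ℕ) :
    ∃ δ : ℝ, 0 < δ ∧ ∀ k : ℕ, k ≤ n → k * α + ρ + δ * (k + 1) < ⌊k * α + ρ⌋ + 1 := by
  induction n with
  | zero =>
    refine ⟨(⌊ρ⌋ + 1 - ρ) / 2, by linarith [Int.lt_floor_add_one ρ], fun k hk => ?_⟩
    obtain rfl : k = 0 := by omega
    simp only [Nat.cast_zero, zero_mul, zero_add]
    linarith [Int.lt_floor_add_one ρ]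
  | succ n ih =>
    obtain ⟨δ, hδ, h⟩ := ih
    set x : ℝ := ((n + 1 : ℕ) : ℝ) * α + ρ with hx
    have hgap : 0 < ⌊x⌋ + 1 - x := by linarith [Int.lt_floor_add_one x]
    have hpos : (0 : ℝ) < ((n + 1 : ℕ) : ℝ) + 1 := by positivity
    have hη : 0 < (⌊x⌋ + 1 - x) / 2 / (((n + 1 : ℕ) : ℝ) + 1) := by positivity
    refine ⟨min δ ((⌊x⌋ + 1 - x) / 2 / (((n + 1 : ℕ) : ℝ) + 1)), lt_min hδ hη, fun k hk => ?_⟩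
    rcases Nat.lt_or_ge n k with hlt | hle
    · obtain rfl : k = n + 1 := by omega
      have h1 := mul_le_mul_of_nonneg_right
        (min_le_right δ ((⌊x⌋ + 1 - x) / 2 / (((n + 1 : ℕ) : ℝ) + 1))) hpos.le
      rw [div_mul_cancel₀ _ hpos.ne'] at h1
      rw [← hx]
      linarith
    · have h1 := mul_le_mul_of_nonneg_right
        (min_le_left δ ((⌊x⌋ + 1 - x) / 2 / (((n + 1 : ℕ) : ℝ) + 1)))
        (by positivity : (0 : ℝ) ≤ k + 1)
      linarith [h k hle]

theorem DefinesWord.congr_floor {α ρ α' ρ' : ℝ} {w : List Bool} (h : DefinesWord α ρ w)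
    (hf : ∀ k : ℕ, k ≤ w.length → ⌊k * α' + ρ'⌋ = ⌊k * α + ρ⌋) : DefinesWord α' ρ' w := by
  intro k hk
  have h1 := hf (k + 1) hk
  push_cast at h1
  rw [h k hk, h1, hf k hk.le]

theorem exists_definesWord {α ρ : ℝ} (hα : α ∈ Set.Ioo (0 : ℝ) 1) (n : ℕ) :
    ∃ w : List Bool, w.length = n ∧ DefinesWord α ρ w := by
  refine ⟨List.ofFn fun k : Fin n =>
    decide (⌊((k : ℕ) : ℝ) * α + ρ⌋ < ⌊(((k : ℕ) : ℝ) + 1) * α + ρ⌋), by simp, fun k hk => ?_⟩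
  have h1 : ⌊(k : ℝ) * α + ρ⌋ ≤ ⌊((k : ℝ) + 1) * α + ρ⌋ :=
    Int.floor_le_floor (by linarith [hα.1])
  have h2 : ⌊((k : ℝ) + 1) * α + ρ⌋ ≤ ⌊(k : ℝ) * α + ρ⌋ + 1 := by
    rw [← Int.floor_add_one]
    exact Int.floor_le_floor (by linarith [hα.2])
  simp only [List.get_eq_getElem, List.getElem_ofFn, decide_eq_true_eq]
  split_ifs <;> omega

theorem DefinesWord.prefix_of_length_le {α ρ : ℝ} {w w' : List Bool} (h : DefinesWord α ρ w)
    (h' : DefinesWord α ρ w') (hle : w.length ≤ w'.length) : w <+: w' := by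
  rw [List.prefix_iff_getElem]
  refine ⟨hle, fun k hk => ?_⟩
  have h1 := (h k hk).trans (h' k (hk.trans_le hle)).symm
  simp only [List.get_eq_getElem] at h1
  cases hw : w[k] <;> cases hw' : w'[k] <;> simp [hw, hw'] at h1 ⊢

theorem DefinesWord.count_take {α ρ : ℝ} {w : List Bool} (h : DefinesWord α ρ w) (i : ℕ)
    (hi : i ≤ w.length) : ((w.take i).count true : ℤ) = ⌊i * α + ρ⌋ - ⌊ρ⌋ := by
  induction i with
  | zero => simp
  | succ k ih =>
    have h1 := h k hi
    have h2 := ih (by omega)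
    rw [List.take_succ_eq_append_getElem hi, List.count_append]
    simp only [List.get_eq_getElem] at h1
    push_cast
    rw [h2]
    cases hw : w[k] <;> simp [hw] at h1 ⊢ <;> omega

theorem finite_integerPoints (l : ℝ × ℝ) (n : ℕ) :
    {p : ℤ × ℤ | 0 ≤ p.1 ∧ (p.1 : ℝ) ≤ n ∧ IsIntegerPoint l p}.Finite := by
  refine ((Set.finite_Icc (0 : ℤ) n).image fun i : ℤ => (i, ⌊l.1 * i + l.2⌋)).subset ?_
  rintro ⟨i, j⟩ ⟨h0, h1, h2⟩
  refine ⟨i, ⟨h0, by exact_mod_cast h1⟩, ?_⟩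
  have h3 : (j : ℝ) = l.1 * i + l.2 := h2
  simp [← h3]

/-- A word of length `n` defined by a line that contains two integer points, one in each half of
the grid, lies in the image of that line and goes through all of its integer points. -/
theorem DefinesWord.mem_mImage_and_goesThrough {α ρ : ℝ} {w : List Bool}
    (hα : α ∈ Set.Ioo (0 : ℝ) 1) (hρ : ρ ∈ Set.Ioo (0 : ℝ) 1) (h : DefinesWord α ρ w)
    {p₁ p₂ : ℤ × ℤ} (hp₁ : IsIntegerPoint (α, ρ) p₁) (hp₂ : IsIntegerPoint (α, ρ) p₂)
    (h₀ : 0 ≤ p₁.1) (h₁ : (p₁.1 : ℝ) ≤ w.length / 2) (h₂ : (w.length / 2 : ℝ) < p₂.1)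
    (h₃ : (p₂.1 : ℝ) ≤ w.length) :
    (α, ρ) ∈ Lset w.length ∧ w ∈ mImage w.length (α, ρ) ∧
      ∀ p : ℤ × ℤ, 0 ≤ p.1 → (p.1 : ℝ) ≤ w.length → IsIntegerPoint (α, ρ) p →
        GoesThrough w p := by
  have hlt : p₁.1 < p₂.1 := by exact_mod_cast h₁.trans_lt h₂
  have hfloor : ⌊ρ⌋ = 0 := Int.floor_eq_zero_iff.2 ⟨hρ.1.le, hρ.2⟩
  refine ⟨⟨⟨hα.1.le, hα.2.le⟩, ⟨hρ.1.le, hρ.2.le⟩, ?_⟩,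
    ⟨⟨rfl, α, ρ, hα, hρ, h⟩, ?_⟩, ?_⟩
  · refine (Set.one_lt_ncard (finite_integerPoints _ _)).2 ⟨p₁, ⟨h₀, ?_, hp₁⟩, p₂,
      ⟨h₀.trans hlt.le, h₃, hp₂⟩, fun he => hlt.ne (congrArg Prod.fst he)⟩
    exact (Int.cast_le.2 hlt.le).trans h₃
  · obtain ⟨ε, hε, hgap⟩ := exists_pos_forall_add_lt_floor_add_one α ρ w.length
    have hgap' : ∀ k : ℕ, k ≤ w.length → k * α + (ρ + ε) < ⌊k * α + ρ⌋ + 1 := by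
      intro k hk
      have : 0 ≤ ε * k := by positivity
      linarith [hgap k hk]
    refine ⟨(α, ρ + ε), ⟨hα, by linarith [hρ.1], ?_⟩, h.congr_floor fun k hk => ?_, ?_,
      p₁, p₂, hp₁, hp₂, h₀, h₁, h₂, h₃, ?_, ?_⟩
    · have := hgap' 0 (Nat.zero_le _)
      simpa [hfloor] using this
    · rw [Int.floor_eq_iff]
      exact ⟨by linarith [Int.floor_le (k * α + ρ)], hgap' k hk⟩
    · rintro ⟨⟨i, j⟩, hi0, hin, hmin, hmax⟩
      simp only at hi0 hin hmin hmax
      lift i to ℕ using hi0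
      have hi : i ≤ w.length := by exact_mod_cast hin
      rw [min_eq_left (by linarith)] at hmin
      rw [max_eq_right (by linarith)] at hmax
      push_cast at hmin hmax
      have h1 := hgap' i hi
      have h2 : j < ⌊i * α + ρ⌋ + 1 := by
        have : (j : ℝ) < ⌊i * α + ρ⌋ + 1 := by linarith
        exact_mod_cast this
      have h3 : ⌊i * α + ρ⌋ < j := by
        rw [Int.floor_lt]
        linarith
      omega
    · have : (p₁.2 : ℝ) = α * p₁.1 + ρ := hp₁
      simp only
      linarith
    · have : (p₂.2 : ℝ) = α * p₂.1 + ρ := hp₂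
      simp only
      linarith
  · rintro ⟨i, j⟩ hi0 hin hp
    simp only at hi0 hin
    lift i to ℕ using hi0
    have hi : i ≤ w.length := by exact_mod_cast hin
    have hj : (j : ℝ) = α * i + ρ := by simpa [IsIntegerPoint] using hp
    have hc := h.count_take i hi
    rw [hfloor, mul_comm, ← hj, Int.floor_intCast, sub_zero] at hc
    exact hc

/-- A finite Sturmian word is defined by a line with rational intercept through an integer point
of positive abscissa. -/
theorem IsFiniteSturmian.exists_line_through_integerPoint {w : List Bool}
    (hw : IsFiniteSturmian w) :
    ∃ (α : ℝ) (r : ℚ) (m : ℕ) (j : ℤ), α ∈ Set.Ioo (0 : ℝ) 1 ∧ (r : ℝ) ∈ Set.Ioo (0 : ℝ) 1 ∧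
      DefinesWord α r w ∧ 0 < m ∧ (j : ℝ) = α * m + r := by
  obtain ⟨α, ρ, hα, hρ, h⟩ := hw
  obtain ⟨δ, hδ, hgap⟩ := exists_pos_forall_add_lt_floor_add_one α ρ w.length
  obtain ⟨r, hr, hr'⟩ := exists_rat_btwn (show ρ < ρ + δ by linarith)
  obtain ⟨m, hm⟩ := exists_nat_one_div_lt (lt_min hδ (sub_pos.2 hα.2))
  have hM : (0 : ℝ) < (m : ℝ) + 1 := by positivity
  set x : ℝ := α * ((m : ℝ) + 1) + r with hx
  have hj := Int.le_ceil x
  have hj' := Int.ceil_lt_add_one x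
  have hle : α ≤ (⌈x⌉ - r) / ((m : ℝ) + 1) := by
    rw [le_div_iff₀ hM]
    linarith
  have hlt : (⌈x⌉ - r) / ((m : ℝ) + 1) < α + 1 / ((m : ℝ) + 1) := by
    rw [div_lt_iff₀ hM, add_mul, div_mul_cancel₀ _ hM.ne']
    linarith
  have hm1 := hm.trans_le (min_le_left _ _)
  have hm2 := hm.trans_le (min_le_right _ _)
  refine ⟨(⌈x⌉ - r) / ((m : ℝ) + 1), r, m + 1, ⌈x⌉, ⟨hα.1.trans_le hle, by linarith⟩,
    ⟨hρ.1.trans hr, ?_⟩, h.congr_floor fun k hk => ?_, m.succ_pos, ?_⟩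
  · have h0 := hgap 0 (Nat.zero_le _)
    rw [Nat.cast_zero, zero_mul, zero_add, Int.floor_eq_zero_iff.2 ⟨hρ.1.le, hρ.2⟩,
      Int.cast_zero] at h0
    linarith
  · have hk0 : (0 : ℝ) ≤ k := k.cast_nonneg
    have h1 := mul_le_mul_of_nonneg_left hle hk0
    have h2 := mul_le_mul_of_nonneg_left (hlt.le.trans (by linarith : _ ≤ α + δ)) hk0
    rw [Int.floor_eq_iff]
    exact ⟨by linarith [Int.floor_le (k * α + ρ)], by linarith [hgap k hk]⟩
  · push_cast
    rw [div_mul_cancel₀ _ hM.ne']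
    ring

/-- Every finite Sturmian word `w` has a finite Sturmian extension `w'` that goes
through all integer points (inside the grid) of the line `ℓ' ∈ L_{|w'|}` with
`w' ∈ m(ℓ')`. -/
theorem extend_through_all_points (w : List Bool) (hw : IsFiniteSturmian w) :
    ∃ w' : List Bool, w <+: w' ∧ IsFiniteSturmian w' ∧
      ∃ l' ∈ Lset w'.length, w' ∈ mImage w'.length l' ∧
        ∀ p : ℤ × ℤ, 0 ≤ p.1 → (p.1 : ℝ) ≤ w'.length → IsIntegerPoint l' p →
          GoesThrough w' p := by
  obtain ⟨α, r, m, j, hα, hr, h, hm, hj⟩ := hw.exists_line_through_integerPoint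
  have hm1 : 1 ≤ m := hm
  have hd : 1 ≤ r.den * (w.length + 1) := Nat.mul_pos r.pos (Nat.succ_pos _)
  have hdm : m ≤ m * (r.den * (w.length + 1)) := Nat.le_mul_of_pos_right m hd
  have hlen : w.length ≤ m + m * (r.den * (w.length + 1)) := by
    have h1 : w.length + 1 ≤ r.den * (w.length + 1) := Nat.le_mul_of_pos_left _ r.pos
    have h2 := Nat.le_mul_of_pos_left (r.den * (w.length + 1)) hm
    omega
  obtain ⟨w', hw', h'⟩ :=
    exists_definesWord (ρ := (r : ℝ)) hα (m + m * (r.den * (w.length + 1)))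
  refine ⟨w', h.prefix_of_length_le h' (by omega), ⟨α, r, hα, hr, h'⟩, (α, r), ?_⟩
  have hden : (r : ℝ) * r.den = r.num := by exact_mod_cast r.mul_den_eq_num
  have hcast : (2 * m : ℝ) ≤ w'.length := by
    have : 2 * m ≤ w'.length := by omega
    exact_mod_cast this
  have hpos : (1 : ℝ) ≤ m := by exact_mod_cast hm1
  refine h'.mem_mImage_and_goesThrough hα hr (p₁ := ((m : ℤ), j))
    (p₂ := ((w'.length : ℤ), j + (j * r.den - r.num) * (w.length + 1)))
    ?_ ?_ (Int.natCast_nonneg m) ?_ ?_ ?_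
  · simpa [IsIntegerPoint] using hj
  · simp only [IsIntegerPoint, hw']
    push_cast
    rw [← hden, hj]
    ring
  · push_cast
    linarith
  · push_cast
    linarith
  · push_cast
    exact le_rfl
end

section
/- For every integer n ≥ 1, the number of palindromic finite Sturmian words of length n different from the word 1^n (the word consisting of n letters 1) equals the number of integer triples (a,b,c) such that gcd(a,b) = 1, 0 ≤ b < a ≤ n, 0 ≤ c < a, 2c ≡ −bn − 1 (mod a), and the line y = (b/a)x + c/a contains at least two integer points (i,j) ∈ ℤ×ℤ with 0 ≤ i ≤ n. -/
/-- The set of integer triples `(a,b,c)` with `gcd(a,b) = 1`, `0 ≤ b < a ≤ n`,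
`0 ≤ c < a`, `2c ≡ -bn-1 (mod a)`, such that the line `y = (b/a)x + c/a` contains
at least two integer points `(i,j)` with `0 ≤ i ≤ n`. -/
def palTriples (n : ℕ) : Set (ℤ × ℤ × ℤ) :=
  {t | Int.gcd t.1 t.2.1 = 1 ∧ 0 ≤ t.2.1 ∧ t.2.1 < t.1 ∧ t.1 ≤ (n : ℤ) ∧
       0 ≤ t.2.2 ∧ t.2.2 < t.1 ∧ (t.1 ∣ 2 * t.2.2 + t.2.1 * n + 1) ∧
       ∃ p q : ℤ × ℤ, p ≠ q ∧ 0 ≤ p.1 ∧ p.1 ≤ (n : ℤ) ∧ 0 ≤ q.1 ∧ q.1 ≤ (n : ℤ) ∧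
         p.2 * t.1 = t.2.1 * p.1 + t.2.2 ∧ q.2 * t.1 = t.2.1 * q.1 + t.2.2}

/-- The number of letters `1` among the first `k` letters of the word attached to `(a, b, c)`. -/
def tripleHeight (t : ℤ × ℤ × ℤ) (k : ℕ) : ℤ := (t.2.1 * k + t.2.2) / t.1

/-- The length-`n` word of the digital line `y = (b/a)x + c/a`. -/
def tripleWord (n : ℕ) (t : ℤ × ℤ × ℤ) : List Bool :=
  List.ofFn fun k : Fin n => decide (tripleHeight t (k + 1) - tripleHeight t k = 1)

lemma tripleHeight_zero {n : ℕ} {t : ℤ × ℤ × ℤ} (ht : t ∈ palTriples n) :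
    tripleHeight t 0 = 0 := by
  obtain ⟨-, -, -, -, h1, h2, -⟩ := ht
  simp only [tripleHeight, Nat.cast_zero, mul_zero, zero_add]
  exact Int.ediv_eq_zero_of_lt h1 h2

lemma tripleHeight_bounds {n : ℕ} {t : ℤ × ℤ × ℤ} (ht : t ∈ palTriples n) (k : ℕ) :
    t.1 * tripleHeight t k ≤ t.2.1 * k + t.2.2 ∧
      t.2.1 * k + t.2.2 < t.1 * tripleHeight t k + t.1 := by
  obtain ⟨-, h0, h1, -⟩ := ht
  have ha : 0 < t.1 := by omega
  have := Int.mul_ediv_add_emod (t.2.1 * k + t.2.2) t.1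
  have := Int.emod_nonneg (t.2.1 * k + t.2.2) ha.ne'
  have := Int.emod_lt_of_pos (t.2.1 * k + t.2.2) ha
  simp only [tripleHeight]
  constructor <;> linarith

lemma tripleHeight_step {n : ℕ} {t : ℤ × ℤ × ℤ} (ht : t ∈ palTriples n) (k : ℕ) :
    tripleHeight t (k + 1) - tripleHeight t k = 0 ∨
      tripleHeight t (k + 1) - tripleHeight t k = 1 := by
  have h1 := tripleHeight_bounds ht k
  have h2 := tripleHeight_bounds ht (k + 1)
  obtain ⟨-, h0, h3, -⟩ := ht
  push_cast at h2
  have : -1 < tripleHeight t (k + 1) - tripleHeight t k := by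
    by_contra! h
    nlinarith
  have : tripleHeight t (k + 1) - tripleHeight t k < 2 := by
    by_contra! h
    nlinarith
  omega

lemma tripleHeight_add {n : ℕ} {t : ℤ × ℤ × ℤ} (ht : t ∈ palTriples n) {k : ℕ} (hk : k ≤ n) :
    t.1 * (tripleHeight t k + tripleHeight t (n - k) + 1) = 2 * t.2.2 + t.2.1 * n + 1 := by
  have h1 := tripleHeight_bounds ht k
  have h2 := tripleHeight_bounds ht (n - k)
  obtain ⟨-, h0, h3, -, -, -, ⟨d, hd⟩, -⟩ := ht
  rw [Nat.cast_sub hk] at h2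
  have : d - 2 < tripleHeight t k + tripleHeight t (n - k) := by
    by_contra! h
    nlinarith
  have : tripleHeight t k + tripleHeight t (n - k) < d := by
    by_contra! h
    nlinarith
  rw [hd, show tripleHeight t k + tripleHeight t (n - k) + 1 = d by omega]

lemma tripleHeight_last {n : ℕ} {t : ℤ × ℤ × ℤ} (ht : t ∈ palTriples n) :
    t.1 * (tripleHeight t n + 1) = 2 * t.2.2 + t.2.1 * n + 1 := by
  have := tripleHeight_add ht (Nat.zero_le n)
  rwa [tripleHeight_zero ht, Nat.sub_zero, zero_add] at this

lemma tripleHeight_reflect {n : ℕ} {t : ℤ × ℤ × ℤ} (ht : t ∈ palTriples n) {k : ℕ}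
    (hk : k ≤ n) : tripleHeight t k + tripleHeight t (n - k) = tripleHeight t n := by
  have h := (tripleHeight_add ht hk).trans (tripleHeight_last ht).symm
  have ha : t.1 ≠ 0 := by
    obtain ⟨-, h0, h1, -⟩ := ht
    omega
  have := mul_left_cancel₀ ha h
  omega

/-- The line of a triple has integer points on both sides of the midpoint of `[0, n]`. -/
lemma exists_points_around_midpoint {n : ℕ} {t : ℤ × ℤ × ℤ} (ht : t ∈ palTriples n) :
    ∃ k l : ℕ, 2 * k ≤ n ∧ n ≤ 2 * l ∧ l ≤ n ∧
      t.1 * tripleHeight t k = t.2.1 * k + t.2.2 ∧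
      t.1 * tripleHeight t l = t.2.1 * l + t.2.2 := by
  obtain ⟨a, b, c⟩ := t
  obtain ⟨hg, h0, h1, h2, h3, h4, -, p, q, hpq, hp0, hpn, hq0, hqn, hp, hq⟩ := ht
  simp only [tripleHeight] at *
  have ha : 0 < a := by omega
  have hdvd : a ∣ p.1 - q.1 := by
    refine IsCoprime.dvd_of_dvd_mul_left (Int.isCoprime_iff_gcd_eq_one.2 hg) ⟨p.2 - q.2, ?_⟩
    linarith
  have hne : p.1 ≠ q.1 := by
    intro h
    apply hpq
    refine Prod.ext h (mul_right_cancel₀ ha.ne' (hp.trans ?_))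
    rw [h, hq]
  have hfar : a ≤ |p.1 - q.1| := Int.le_of_dvd (abs_pos.2 (sub_ne_zero.2 hne))
    ((dvd_abs _ _).2 hdvd)
  have hdp : a ∣ b * p.1 + c := ⟨p.2, by linarith⟩
  have hmul : ∀ k : ℤ, a ∣ p.1 - k → a ∣ b * k + c := fun k hk => by
    have := dvd_sub hdp (hk.mul_left b)
    ring_nf at this ⊢
    exact this
  have hk0 := Int.emod_nonneg p.1 ha.ne'
  have hk1 := Int.emod_lt_of_pos p.1 ha
  have hkd : a ∣ p.1 - p.1 % a := Int.dvd_self_sub_emod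
  have hl0 := Int.emod_nonneg (n - p.1) ha.ne'
  have hl1 := Int.emod_lt_of_pos (n - p.1) ha
  have hld : a ∣ (n - p.1) - (n - p.1) % a := Int.dvd_self_sub_emod
  have hkq : a ∣ q.1 - p.1 % a := by
    have := dvd_sub hkd hdvd
    ring_nf at this ⊢
    exact this
  have hlq : a ∣ (n - q.1) - (n - p.1) % a := by
    have := dvd_add hld hdvd
    ring_nf at this ⊢
    exact this
  have lower : ∀ x r : ℤ, 0 ≤ x → r < a → a ∣ x - r → r ≤ x := by
    intro x r hx hr ⟨d, hd⟩
    have : -1 < d := by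
      by_contra! h
      nlinarith
    nlinarith
  have e1 := lower _ _ hp0 hk1 hkd
  have e2 := lower _ _ hq0 hk1 hkq
  have e3 := lower _ _ (by omega) hl1 hld
  have e4 := lower _ _ (by omega) hl1 hlq
  have hcase : (p.1 % a + a ≤ n ∧ (n - p.1) % a + a ≤ n) := by
    rcases abs_cases (p.1 - q.1) with h | h <;> omega
  generalize p.1 % a = r at *
  generalize (n - p.1) % a = s at *
  lift r to ℕ using hk0
  lift s to ℕ using hl0
  refine ⟨r, n - s, by omega, by omega, by omega, ?_, ?_⟩
  · exact Int.mul_ediv_cancel' (hmul _ hkd)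
  · refine Int.mul_ediv_cancel' (hmul _ ?_)
    rw [Nat.cast_sub (by omega)]
    have := hld.neg_right
    ring_nf at this ⊢
    exact this

lemma doubled_height_le {n : ℕ} {t : ℤ × ℤ × ℤ} (ht : t ∈ palTriples n) (k : ℕ) :
    1 ≤ t.2.1 * (2 * k - n) - t.1 * (2 * tripleHeight t k - tripleHeight t n - 1) := by
  have := tripleHeight_last ht
  have := (tripleHeight_bounds ht k).1
  linarith

lemma doubled_height_eq {n : ℕ} {t : ℤ × ℤ × ℤ} (ht : t ∈ palTriples n) {k : ℕ}
    (hk : t.1 * tripleHeight t k = t.2.1 * k + t.2.2) :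
    t.2.1 * (2 * k - n) - t.1 * (2 * tripleHeight t k - tripleHeight t n - 1) = 1 := by
  have := tripleHeight_last ht
  linarith

lemma fst_le_of_tripleHeight_eq {n : ℕ} {s t : ℤ × ℤ × ℤ} (hs : s ∈ palTriples n)
    (ht : t ∈ palTriples n) (h : ∀ k ≤ n, tripleHeight s k = tripleHeight t k) :
    t.1 ≤ s.1 ∧ (t.1 = s.1 → t.2.1 = s.2.1) := by
  obtain ⟨k, l, hk, hl, hln, ek, el⟩ := exists_points_around_midpoint ht
  have fk := doubled_height_eq ht ek
  have fl := doubled_height_eq ht el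
  have gk := doubled_height_le hs k
  have gl := doubled_height_le hs l
  rw [h k (by omega), h n le_rfl] at gk
  rw [h l hln, h n le_rfl] at gl
  obtain ⟨-, hs0, hs1, -⟩ := hs
  obtain ⟨-, ht0, ht1, -⟩ := ht
  generalize 2 * tripleHeight t k - tripleHeight t n - 1 = j at *
  generalize 2 * tripleHeight t l - tripleHeight t n - 1 = j' at *
  obtain ⟨m, hm⟩ : ∃ m : ℤ, m = 2 * k - n := ⟨_, rfl⟩
  obtain ⟨m', hm'⟩ : ∃ m' : ℤ, m' = 2 * l - n := ⟨_, rfl⟩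
  rw [← hm] at fk gk
  rw [← hm'] at fl gl
  have hm0 : m ≤ 0 := by omega
  have hm0' : 0 ≤ m' := by omega
  clear hm hm' ek el h
  obtain ⟨a, b, c⟩ := t
  obtain ⟨a', b', c'⟩ := s
  simp only at *
  obtain ⟨D, hD⟩ : ∃ D, D = b' * a - a' * b := ⟨_, rfl⟩
  have ik : a * (b' * m - a' * j) - a' = m * D := by
    rw [hD]; linear_combination a' * fk
  have il : a * (b' * m' - a' * j') - a' = m' * D := by
    rw [hD]; linear_combination a' * fl
  have ha : 0 < a := by omega
  constructor
  · rcases le_total 0 D with h | h <;> nlinarith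
  · rintro rfl
    by_cases ha1 : a = 1
    · omega
    have hmne : m ≠ 0 := by
      rintro rfl
      have : a ∣ 1 := ⟨-j, by linarith⟩
      exact ha1 (Int.eq_one_of_dvd_one ha.le this)
    have hmne' : m' ≠ 0 := by
      rintro rfl
      have : a ∣ 1 := ⟨-j', by linarith⟩
      exact ha1 (Int.eq_one_of_dvd_one ha.le this)
    have : D = 0 := by
      rcases lt_trichotomy D 0 with h | h | h
      · have : 0 < m' := by omega
        nlinarith
      · exact h
      · have : m < 0 := by omega
        nlinarith
    rw [this] at hD
    exact mul_left_cancel₀ ha.ne' (by linarith)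

/-- A triple is determined by the heights of its word. -/
lemma eq_of_tripleHeight_eq {n : ℕ} {s t : ℤ × ℤ × ℤ} (hs : s ∈ palTriples n)
    (ht : t ∈ palTriples n) (h : ∀ k ≤ n, tripleHeight s k = tripleHeight t k) : s = t := by
  have h1 := fst_le_of_tripleHeight_eq hs ht h
  have h2 := fst_le_of_tripleHeight_eq ht hs fun k hk => (h k hk).symm
  have ea : s.1 = t.1 := le_antisymm h2.1 h1.1
  have eb : s.2.1 = t.2.1 := h2.2 ea
  have es := tripleHeight_last hs
  have et := tripleHeight_last ht
  rw [ea, eb, h n le_rfl] at es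
  exact Prod.ext ea (Prod.ext eb (by linarith))

/-- The slope `b / a` is compatible with the symmetric height function `S`. -/
def CompatibleSlope (n : ℕ) (S : ℕ → ℤ) (a b : ℤ) : Prop :=
  ∀ k ≤ n, a * (2 * S k - S n - 1) < b * (2 * k - n)

lemma exists_min_compatibleSlope {n : ℕ} {S : ℕ → ℤ}
    (h : ∃ a b : ℤ, 0 < a ∧ 0 ≤ b ∧ b ≤ a ∧ CompatibleSlope n S a b) :
    ∃ a b : ℤ, 0 < a ∧ 0 ≤ b ∧ b ≤ a ∧ CompatibleSlope n S a b ∧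
      ∀ v u : ℤ, 0 < v → v < a → 0 ≤ u → u ≤ v → ¬ CompatibleSlope n S v u := by
  classical
  have h' : ∃ a : ℕ, ∃ b : ℤ, 0 < a ∧ 0 ≤ b ∧ b ≤ a ∧ CompatibleSlope n S a b := by
    obtain ⟨a, b, h1, h2, h3, h4⟩ := h
    lift a to ℕ using h1.le
    exact ⟨a, b, by exact_mod_cast h1, h2, h3, h4⟩
  obtain ⟨b, h1, h2, h3, h4⟩ := Nat.find_spec h'
  refine ⟨Nat.find h', b, by exact_mod_cast h1, h2, h3, h4, fun v u hv hva hu huv hc => ?_⟩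
  lift v to ℕ using hv.le
  exact Nat.find_min h' (by exact_mod_cast hva) ⟨u, by exact_mod_cast hv, hu, huv, hc⟩

lemma CompatibleSlope.abs_lt {n : ℕ} {S : ℕ → ℤ} (hpal : ∀ k ≤ n, S k + S (n - k) = S n)
    {a b : ℤ} (h : CompatibleSlope n S a b) {k : ℕ} (hk : k ≤ n) :
    a * (2 * S k - S n - 1) < b * (2 * k - n) ∧ b * (2 * k - n) < a * (2 * S k - S n + 1) := by
  refine ⟨h k hk, ?_⟩
  have h1 := h (n - k) (by omega)
  rw [Nat.cast_sub hk, show S (n - k) = S n - S k by linarith [hpal k hk]] at h1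
  linarith

lemma exists_farey_left {a b : ℤ} (ha : 1 < a) (hb : 0 < b) (hg : IsCoprime a b) :
    ∃ u v : ℤ, b * v - a * u = 1 ∧ 0 < v ∧ v < a ∧ 0 ≤ u ∧ u < b := by
  obtain ⟨x, y, hxy⟩ := hg
  have h0 := Int.emod_nonneg y (by omega : a ≠ 0)
  have h1 := Int.emod_lt_of_pos y (by omega : 0 < a)
  have h2 := Int.mul_ediv_add_emod y a
  have e : b * (y % a) - a * (-x - b * (y / a)) = 1 := by linear_combination hxy + b * h2
  have hv : y % a ≠ 0 := by
    intro h
    rw [h] at e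
    have : a ∣ 1 := ⟨x + b * (y / a), by linarith⟩
    have := Int.le_of_dvd one_pos this
    omega
  refine ⟨-x - b * (y / a), y % a, e, by omega, h1, ?_, ?_⟩
  · generalize y % a = v at *
    generalize -x - b * (y / a) = u at *
    have : 0 < v := by omega
    by_contra! h
    nlinarith
  · generalize y % a = v at *
    generalize -x - b * (y / a) = u at *
    by_contra! h
    nlinarith

/-- A symmetric height function with a compatible slope is the height function of a triple,
unless it is the height function of `1^n`. -/
theorem exists_triple_of_compatibleSlope {n : ℕ} (hn : 1 ≤ n) {S : ℕ → ℤ} (hS0 : S 0 = 0)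
    (hpal : ∀ k ≤ n, S k + S (n - k) = S n)
    (hslope : ∃ a b : ℤ, 0 < a ∧ 0 ≤ b ∧ b ≤ a ∧ CompatibleSlope n S a b)
    (hne : ∃ k ≤ n, S k ≠ k) :
    ∃ t ∈ palTriples n, ∀ k ≤ n, tripleHeight t k = S k := by
  obtain ⟨a, b, ha, hb, hba, hc, hmin⟩ := exists_min_compatibleSlope hslope
  have hcop : IsCoprime a b := by
    rw [Int.isCoprime_iff_gcd_eq_one]
    by_contra hg
    have hgpos : 0 < Int.gcd a b := Int.gcd_pos_of_ne_zero_left _ ha.ne'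
    obtain ⟨g, hgdef⟩ : ∃ g : ℤ, g = Int.gcd a b := ⟨_, rfl⟩
    have hg2 : 2 ≤ g := by omega
    obtain ⟨v, hv⟩ : g ∣ a := hgdef ▸ Int.gcd_dvd_left ..
    obtain ⟨u, hu⟩ : g ∣ b := hgdef ▸ Int.gcd_dvd_right ..
    have hv0 : 0 < v := by
      by_contra! h
      nlinarith
    refine hmin v u hv0 (by nlinarith) ?_ ?_ fun k hk => ?_
    · by_contra! h
      nlinarith
    · by_contra! h
      nlinarith
    · have := hc k hk
      rw [hv, hu, mul_assoc, mul_assoc] at this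
      exact lt_of_mul_lt_mul_left this (by omega)
  have hparity : ¬ (Even (S n + 1) ∧ Even (n : ℤ)) := by
    rintro ⟨⟨x, hx⟩, ⟨y, hy⟩⟩
    have := hpal (n / 2) (by omega)
    rw [show n - n / 2 = n / 2 by omega] at this
    omega
  have key : (∃ k l : ℕ, ∃ i j : ℤ, k ≤ n ∧ l ≤ n ∧ k < l ∧
      b * (2 * k - n) - a * (2 * i - S n - 1) = 1 ∧
      b * (2 * l - n) - a * (2 * j - S n - 1) = 1) →
      ∃ t ∈ palTriples n, ∀ k ≤ n, tripleHeight t k = S k := by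
    rintro ⟨k, l, i, j, hk, hl, hkl, ek, el⟩
    obtain ⟨c, hcdef⟩ : ∃ c, c = a * i - b * k := ⟨_, rfl⟩
    have hlast : a * (S n + 1) = 2 * c + b * n + 1 := by
      rw [hcdef]; linarith
    have hbd : ∀ m ≤ n, a * S m ≤ b * m + c ∧ b * m + c < a * S m + a := by
      intro m hm
      have := hc.abs_lt hpal hm
      constructor
      · have : 2 * (a * S m) < 2 * (b * m + c) + 1 := by linarith
        omega
      · have : 2 * (b * m + c) + 1 < 2 * (a * S m + a) := by linarith
        omega
    have hc0 := hbd 0 (by omega)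
    rw [hS0, mul_zero, Nat.cast_zero, mul_zero, zero_add, zero_add] at hc0
    have hlen : a ≤ l - k := by
      refine Int.le_of_dvd (by omega) (hcop.dvd_of_dvd_mul_left ⟨j - i, ?_⟩)
      linarith
    have hbltp : b < a := by
      refine lt_of_le_of_ne hba fun hab => ?_
      obtain ⟨m, hm, hmne⟩ := hne
      have h1 : a = 1 := by
        rw [hab, isCoprime_self] at hcop
        exact (Int.isUnit_iff.1 hcop).resolve_right (by omega)
      have := hbd m hm
      rw [hab, h1, one_mul, one_mul] at this
      omega
    refine ⟨(a, b, c), ⟨Int.isCoprime_iff_gcd_eq_one.1 hcop, hb, hbltp, ?_, hc0.1, hc0.2,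
      ⟨S n + 1, hlast.symm⟩, (k, i), (l, j), ?_, ?_, ?_, ?_, ?_, ?_, ?_⟩, fun m hm => ?_⟩
    · simp only; omega
    · intro h
      have := congrArg Prod.fst h
      simp only at this
      omega
    · simp
    · simpa using hk
    · simp
    · simpa using hl
    · simp only; linarith
    · simp only; linarith
    · have := hbd m hm
      exact Int.ediv_eq_iff_of_pos ha |>.2 (by constructor <;> linarith)
  apply key
  by_cases ha1 : a = 1
  · subst ha1
    rcases (by omega : b = 0 ∨ b = 1) with rfl | rfl
    · have h1 := hc.abs_lt hpal (Nat.zero_le n)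
      rw [hS0] at h1
      have : S n = 0 := by omega
      exact ⟨0, n, 0, 0, by omega, le_rfl, by omega, by simp [this], by simp [this]⟩
    · obtain ⟨m, hm, hmne⟩ := hne
      have h1 := hc.abs_lt hpal hm
      have h2 := hc.abs_lt hpal (Nat.zero_le n)
      rw [hS0] at h2
      omega
  have hb0 : b ≠ 0 := by
    rintro rfl
    rw [isCoprime_zero_right, Int.isUnit_iff] at hcop
    omega
  have hbne : b ≠ a := by
    rintro rfl
    rw [isCoprime_self, Int.isUnit_iff] at hcop
    omega
  obtain ⟨u, v, huv, hv0, hva, hu0, hub⟩ := exists_farey_left (by omega) (by omega)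
    hcop
  have huv' : u ≤ v := by
    by_contra! h
    nlinarith
  obtain ⟨k, hk, hkv⟩ : ∃ k ≤ n, u * (2 * k - n) ≤ v * (2 * S k - S n - 1) := by
    have := hmin v u hv0 hva hu0 huv'
    simpa only [CompatibleSlope, not_forall, not_lt, exists_prop] using this
  have hxy : b - u ≤ a - v := by
    have h3 : a * (b - u) = b * (a - v) + 1 := by linear_combination huv
    by_contra! h
    have : a * (a - v + 1) ≤ a * (b - u) := by gcongr; omega
    have : b * (a - v) ≤ a * (a - v) := by gcongr
    linarith
  obtain ⟨l, hl, hlv⟩ : ∃ l ≤ n,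
      (b - u) * (2 * l - n) ≤ (a - v) * (2 * S l - S n - 1) := by
    have := hmin (a - v) (b - u) (by omega) (by omega) (by omega) hxy
    simpa only [CompatibleSlope, not_forall, not_lt, exists_prop] using this
  have hdk := hc k hk
  have hdl := hc l hl
  obtain ⟨d, hd⟩ : ∃ d, d = b * (2 * k - n) - a * (2 * S k - S n - 1) := ⟨_, rfl⟩
  obtain ⟨e, he⟩ : ∃ e, e = v * (2 * S k - S n - 1) - u * (2 * k - n) := ⟨_, rfl⟩
  obtain ⟨d', hd'⟩ : ∃ d', d' = b * (2 * l - n) - a * (2 * S l - S n - 1) := ⟨_, rfl⟩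
  obtain ⟨e', he'⟩ : ∃ e', e' = (a - v) * (2 * S l - S n - 1) - (b - u) * (2 * l - n) :=
    ⟨_, rfl⟩
  have hM : (2 * k - n : ℤ) = d * v + e * a := by
    rw [hd, he]; linear_combination (-(2 * k - n : ℤ)) * huv
  have hJ : 2 * S k - S n - 1 = d * u + e * b := by
    rw [hd, he]; linear_combination (-(2 * S k - S n - 1)) * huv
  have hM' : (2 * l - n : ℤ) = -(d' * (a - v) + e' * a) := by
    rw [hd', he']; linear_combination (-(2 * l - n : ℤ)) * huv
  have hd0 : 0 < d := by omega
  have he0 : 0 ≤ e := by omega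
  have hd0' : 0 < d' := by omega
  have he0' : 0 ≤ e' := by omega
  have hodd : Odd d := by
    by_contra hev
    rw [Int.not_odd_iff_even] at hev
    obtain ⟨d₂, hd₂⟩ := hev
    have heodd : Odd e := by
      by_contra hev
      rw [Int.not_odd_iff_even] at hev
      obtain ⟨e₂, he₂⟩ := hev
      refine hparity ⟨⟨S k - d₂ * u - e₂ * b, ?_⟩, ⟨k - d₂ * v - e₂ * a, ?_⟩⟩
      · rw [hd₂, he₂] at hJ; linear_combination -hJ
      · rw [hd₂, he₂] at hM; linear_combination -hM
    obtain ⟨e₂, he₂⟩ := heodd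
    have hMa : a ≤ 2 * k - n := by
      rw [hM]
      have : 0 ≤ d * v := by positivity
      have : 1 * a ≤ e * a := by gcongr; omega
      linarith
    obtain ⟨m, hm⟩ : ∃ m : ℤ, 2 * m = n + a := by
      refine ⟨k - d₂ * v - e₂ * a, ?_⟩
      rw [hd₂, he₂] at hM; linear_combination hM
    lift m to ℕ using by omega
    have h1 := hc.abs_lt hpal (k := m) (by omega)
    rw [show (2 * m - n : ℤ) = a by omega, mul_comm b a] at h1
    have h2 := lt_of_mul_lt_mul_left h1.1 ha.le
    have h3 := lt_of_mul_lt_mul_left h1.2 ha.le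
    have h4 : b = 2 * S m - S n := by omega
    have h5 : 2 * S k - S n - 1 = 2 * (d₂ * u + e₂ * b) + b := by
      rw [hJ, hd₂, he₂]; ring
    omega
  have hodd' : Odd d' := by
    obtain ⟨d₂, hd₂⟩ := hodd
    refine ⟨d₂ + b * (l - k) - a * (S l - S k), ?_⟩
    rw [hd']
    linear_combination hd₂ - hd
  obtain ⟨d₂, hd₂⟩ := hodd
  obtain ⟨d₃, hd₃⟩ := hodd'
  have hr : ∃ r : ℕ, (r : ℤ) = k - d₂ * v ∧ n < 2 * r ∧ r ≤ k := by
    have h1 : 2 * (k - d₂ * v) - n = v + e * a := by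
      rw [hd₂] at hM; linear_combination hM
    have h2 : 0 ≤ e * a := by positivity
    have h3 : 0 ≤ d₂ * v := mul_nonneg (by omega) hv0.le
    obtain ⟨r, hr⟩ := Int.eq_ofNat_of_zero_le (by omega : 0 ≤ k - d₂ * v)
    exact ⟨r, hr.symm, by omega, by omega⟩
  have hs : ∃ s : ℕ, (s : ℤ) = l + d₃ * (a - v) ∧ 2 * s < n := by
    have h1 : 2 * (l + d₃ * (a - v)) - n = -((a - v) + e' * a) := by
      rw [hd₃] at hM'; linear_combination hM'
    have h2 : 0 ≤ e' * a := by positivity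
    have h3 : 0 ≤ d₃ * (a - v) := mul_nonneg (by omega) (by omega)
    obtain ⟨s, hs⟩ := Int.eq_ofNat_of_zero_le (by omega : 0 ≤ l + d₃ * (a - v))
    exact ⟨s, hs.symm, by omega⟩
  obtain ⟨r, hr, hr1, hr2⟩ := hr
  obtain ⟨s, hs, hs1⟩ := hs
  refine ⟨s, r, S l + d₃ * (b - u), S k - d₂ * u, by omega, by omega, by omega, ?_, ?_⟩
  · rw [hs]; linear_combination -2 * d₃ * huv - hd' + hd₃
  · rw [hr]; linear_combination -2 * d₂ * huv - hd + hd₂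

/-- A real compatible slope yields a rational one. -/
lemma exists_compatibleSlope_of_real {n : ℕ} {S : ℕ → ℤ} {α : ℝ} (h0 : 0 < α) (h1 : α < 1)
    (h : ∀ k ≤ n, (2 * S k - S n - 1 : ℝ) < α * (2 * k - n)) :
    ∃ a b : ℤ, 0 < a ∧ 0 ≤ b ∧ b ≤ a ∧ CompatibleSlope n S a b := by
  have hev : ∀ᶠ x : ℝ in nhds α, (∀ k ∈ Finset.range (n + 1),
      (2 * S k - S n - 1 : ℝ) < x * (2 * k - n)) ∧ 0 < x ∧ x < 1 := by
    refine Filter.Eventually.and ?_ ((eventually_gt_nhds h0).and (eventually_lt_nhds h1))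
    rw [Filter.eventually_all_finset]
    intro k hk
    have hcont : ContinuousAt (fun x : ℝ => x * (2 * k - n)) α := by fun_prop
    exact hcont.eventually (eventually_gt_nhds (h k (by simpa [Nat.lt_succ_iff] using hk)))
  obtain ⟨U, hU, hUo, hαU⟩ := mem_nhds_iff.1 hev
  obtain ⟨_, hqU, q, rfl⟩ := Rat.denseRange_cast.inter_open_nonempty U hUo ⟨α, hαU⟩
  obtain ⟨hk, hq0, hq1⟩ := hU hqU
  have hden : (0 : ℝ) < (q.den : ℤ) := by exact_mod_cast q.pos
  have hq : (q : ℝ) = (q.num : ℝ) / (q.den : ℤ) := by exact_mod_cast (Rat.num_div_den q).symm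
  refine ⟨q.den, q.num, by exact_mod_cast q.pos, ?_, ?_, fun k hkn => ?_⟩
  · exact Rat.num_nonneg.2 (by exact_mod_cast hq0.le)
  · rw [hq, div_lt_one hden] at hq1
    exact_mod_cast hq1.le
  · have := hk k (by simpa [Nat.lt_succ_iff] using hkn)
    rw [hq, div_mul_eq_mul_div, lt_div_iff₀ hden, mul_comm] at this
    exact_mod_cast this

lemma tripleWord_length (n : ℕ) (t : ℤ × ℤ × ℤ) : (tripleWord n t).length = n := by
  simp [tripleWord]

lemma letter_tripleWord {n : ℕ} {t : ℤ × ℤ × ℤ} (ht : t ∈ palTriples n) {k : ℕ}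
    (hk : k < (tripleWord n t).length) :
    (if (tripleWord n t).get ⟨k, hk⟩ then (1 : ℤ) else 0) =
      tripleHeight t (k + 1) - tripleHeight t k := by
  rcases tripleHeight_step ht k with h | h <;> simp [tripleWord, h]

/-- A word whose letters are the increments of the height function of `t` is `tripleWord n t`. -/
lemma eq_tripleWord {n : ℕ} {t : ℤ × ℤ × ℤ} (ht : t ∈ palTriples n) {w : List Bool}
    (hw : w.length = n) (h : ∀ k : ℕ, (hk : k < w.length) →
      (if w.get ⟨k, hk⟩ then (1 : ℤ) else 0) = tripleHeight t (k + 1) - tripleHeight t k) :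
    w = tripleWord n t := by
  refine List.ext_get (by rw [hw, tripleWord_length]) fun k h1 h2 => ?_
  have := (h k h1).trans (letter_tripleWord ht h2).symm
  cases hx : w.get ⟨k, h1⟩ <;> cases hy : (tripleWord n t).get ⟨k, h2⟩ <;> simp_all

lemma floor_perturbed_line {n : ℕ} {t : ℤ × ℤ × ℤ} (ht : t ∈ palTriples n) {k : ℕ}
    (hk : k ≤ n) :
    ⌊(k : ℝ) * ((t.2.1 + 1 / (2 * (n + 1))) / t.1) + (t.2.2 + 1 / 2) / t.1⌋ =
      tripleHeight t k := by
  have hb := tripleHeight_bounds ht k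
  have ha : (0 : ℝ) < t.1 := by
    obtain ⟨-, h0, h1, -⟩ := ht
    exact_mod_cast (by omega : 0 < t.1)
  have e : (k : ℝ) * ((t.2.1 + 1 / (2 * (n + 1))) / t.1) + (t.2.2 + 1 / 2) / t.1 =
      (t.2.1 * k + t.2.2 + (k / (2 * (n + 1)) + 1 / 2)) / t.1 := by
    field_simp
    ring
  have hn : (0 : ℝ) < 2 * (n + 1) := by positivity
  have h0 : (0 : ℝ) ≤ k / (2 * (n + 1)) := by positivity
  have h1 : (k : ℝ) / (2 * (n + 1)) < 1 / 2 := by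
    have : (k : ℝ) ≤ n := by exact_mod_cast hk
    rw [div_lt_div_iff₀ hn two_pos]
    linarith
  have b1 : (t.1 * tripleHeight t k : ℝ) ≤ t.2.1 * k + t.2.2 := by exact_mod_cast hb.1
  have b2 : (t.2.1 * k + t.2.2 : ℝ) + 1 ≤ t.1 * tripleHeight t k + t.1 := by
    exact_mod_cast hb.2
  rw [Int.floor_eq_iff, e, le_div_iff₀ ha, div_lt_iff₀ ha]
  constructor <;> linarith

lemma tripleWord_mem_sturmianWords {n : ℕ} {t : ℤ × ℤ × ℤ} (ht : t ∈ palTriples n) :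
    tripleWord n t ∈ sturmianWords n := by
  refine ⟨tripleWord_length n t, (t.2.1 + 1 / (2 * (n + 1))) / t.1, (t.2.2 + 1 / 2) / t.1,
    ?_, ?_, fun k hk => ?_⟩
  · obtain ⟨-, h0, h1, -⟩ := ht
    have h0' : (0 : ℝ) ≤ t.2.1 := by exact_mod_cast h0
    have h1' : (t.2.1 : ℝ) + 1 ≤ t.1 := by exact_mod_cast h1
    have ha : (0 : ℝ) < t.1 := by linarith
    refine ⟨by positivity, ?_⟩
    have : (1 : ℝ) / (2 * (n + 1)) < 1 := by
      rw [div_lt_one (by positivity)]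
      have : (0 : ℝ) ≤ n := n.cast_nonneg
      linarith
    rw [div_lt_one ha]
    linarith
  · obtain ⟨-, -, -, -, h0, h1, -⟩ := ht
    have h0' : (0 : ℝ) ≤ t.2.2 := by exact_mod_cast h0
    have h1' : (t.2.2 : ℝ) + 1 ≤ t.1 := by exact_mod_cast h1
    have ha : (0 : ℝ) < t.1 := by linarith
    refine ⟨by positivity, ?_⟩
    rw [div_lt_one ha]
    linarith
  · have hk' : k < n := by rwa [tripleWord_length] at hk
    have h1 := floor_perturbed_line ht (k := k + 1) hk'
    rw [Nat.cast_add, Nat.cast_one] at h1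
    rw [letter_tripleWord ht hk, h1, floor_perturbed_line ht hk'.le]

lemma tripleWord_reverse {n : ℕ} {t : ℤ × ℤ × ℤ} (ht : t ∈ palTriples n) :
    (tripleWord n t).reverse = tripleWord n t := by
  refine eq_tripleWord ht (by rw [List.length_reverse, tripleWord_length]) fun k hk => ?_
  have hk' : k < n := by rwa [List.length_reverse, tripleWord_length] at hk
  have h := letter_tripleWord ht (k := n - 1 - k) (by rw [tripleWord_length]; omega)
  have h1 := tripleHeight_reflect ht (k := k) hk'.le
  have h2 := tripleHeight_reflect ht (k := k + 1) hk'
  rw [show n - 1 - k + 1 = n - k by omega] at h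
  rw [show n - (k + 1) = n - 1 - k by omega] at h2
  simp only [List.get_eq_getElem, List.getElem_reverse, tripleWord_length] at h ⊢
  rw [h]
  omega

lemma tripleWord_ne_replicate {n : ℕ} {t : ℤ × ℤ × ℤ} (ht : t ∈ palTriples n) :
    tripleWord n t ≠ List.replicate n true := by
  intro h
  have hstep : ∀ k < n, tripleHeight t (k + 1) - tripleHeight t k = 1 := fun k hk => by
    have h1 := letter_tripleWord ht (k := k) (by rwa [tripleWord_length])
    simp only [h, List.get_eq_getElem, List.getElem_replicate, if_true] at h1
    exact h1.symm
  have hheight : ∀ k ≤ n, tripleHeight t k = k := by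
    intro k
    induction k with
    | zero => exact fun _ => tripleHeight_zero ht
    | succ k ih =>
      intro hk
      have := hstep k hk
      have := ih (by omega)
      push_cast
      omega
  have hb := (tripleHeight_bounds ht n).1
  rw [hheight n le_rfl] at hb
  obtain ⟨-, h0, h1, h2, h3, h4, -⟩ := ht
  nlinarith

lemma tripleWord_injOn (n : ℕ) : Set.InjOn (tripleWord n) (palTriples n) := by
  intro s hs t ht h
  refine eq_of_tripleHeight_eq hs ht fun k => ?_
  induction k with
  | zero => exact fun _ => by rw [tripleHeight_zero hs, tripleHeight_zero ht]
  | succ k ih =>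
    intro hk
    have h1 := letter_tripleWord hs (k := k) (by rwa [tripleWord_length])
    have h2 := letter_tripleWord ht (k := k) (by rwa [tripleWord_length])
    simp only [List.get_eq_getElem, h] at h1 h2
    have := ih (by omega)
    omega

/-- The heights of a palindromic word are symmetric. -/
lemma height_reflect_of_palindrome {w : List Bool} (hrev : w.reverse = w) {S : ℕ → ℤ}
    (hS0 : S 0 = 0) (hstep : ∀ k : ℕ, (h : k < w.length) →
      (if w.get ⟨k, h⟩ then (1 : ℤ) else 0) = S (k + 1) - S k) :
    ∀ k ≤ w.length, S k + S (w.length - k) = S w.length := by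
  intro k
  induction k with
  | zero => simp [hS0]
  | succ k ih =>
    intro hk
    have h1 := hstep k hk
    have h2 := hstep (w.length - 1 - k) (by omega)
    have h3 : w.get ⟨w.length - 1 - k, by omega⟩ = w.get ⟨k, hk⟩ := by
      have := List.getElem_reverse (l := w) (i := k) (by simpa using hk)
      simp only [hrev] at this
      exact this.symm
    rw [h3, show w.length - 1 - k + 1 = w.length - k by omega] at h2
    rw [show w.length - (k + 1) = w.length - 1 - k by omega]
    have := ih (by omega)
    omega

lemma exists_tripleWord_eq {n : ℕ} (hn : 1 ≤ n) {w : List Bool} (hw : w ∈ sturmianWords n)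
    (hrev : w.reverse = w) (hne : w ≠ List.replicate n true) :
    ∃ t ∈ palTriples n, tripleWord n t = w := by
  obtain ⟨rfl, α, ρ, ⟨hα0, hα1⟩, ⟨hρ0, hρ1⟩, hdef⟩ := hw
  obtain ⟨S, hS⟩ : ∃ S : ℕ → ℤ, ∀ k, S k = ⌊(k : ℝ) * α + ρ⌋ := ⟨_, fun _ => rfl⟩
  have hS0 : S 0 = 0 := by
    rw [hS, Int.floor_eq_zero_iff]
    simpa using ⟨hρ0.le, hρ1⟩
  have hstep : ∀ k : ℕ, (h : k < w.length) →
      (if w.get ⟨k, h⟩ then (1 : ℤ) else 0) = S (k + 1) - S k := fun k hk => by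
    rw [hS, hS, hdef k hk, Nat.cast_add, Nat.cast_one]
  have hpal := height_reflect_of_palindrome hrev hS0 hstep
  have hslope := exists_compatibleSlope_of_real (n := w.length) (S := S) hα0 hα1 fun k hk => by
    have h1 := Int.floor_le ((k : ℝ) * α + ρ)
    have h2 := Int.lt_floor_add_one (((w.length - k : ℕ) : ℝ) * α + ρ)
    rw [← hS] at h1 h2
    rw [Nat.cast_sub hk] at h2
    have h3 : (S k : ℝ) + S (w.length - k) = S w.length := by exact_mod_cast hpal k hk
    linarith
  have hone : ∃ k ≤ w.length, S k ≠ k := by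
    by_contra! h
    refine hne (List.eq_replicate_iff.2 ⟨rfl, fun x hx => ?_⟩)
    obtain ⟨k, hk, rfl⟩ := List.getElem_of_mem hx
    have := hstep k hk
    rw [h k hk.le, h (k + 1) hk] at this
    by_contra hx
    simp [hx] at this
  obtain ⟨t, ht, hh⟩ := exists_triple_of_compatibleSlope hn hS0 hpal hslope hone
  refine ⟨t, ht, (eq_tripleWord ht rfl fun k hk => ?_).symm⟩
  rw [hh k hk.le, hh (k + 1) hk, hstep k hk]

/-- There are as many palindromic finite Sturmian words of length `n` other than
`1^n` as there are triples `(a,b,c)` as above. -/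
theorem palindrome_triple_correspondence (n : ℕ) (hn : 1 ≤ n) :
    {w | w ∈ sturmianWords n ∧ w.reverse = w ∧ w ≠ List.replicate n true}.ncard =
      (palTriples n).ncard := by
  rw [← (tripleWord_injOn n).ncard_image]
  congr 1
  ext w
  constructor
  · rintro ⟨hw, hrev, hne⟩
    exact exists_tripleWord_eq hn hw hrev hne
  · rintro ⟨t, ht, rfl⟩
    exact ⟨tripleWord_mem_sturmianWords ht, tripleWord_reverse ht, tripleWord_ne_replicate ht⟩
end

section
/- Let a ≥ 1 and 0 ≤ b < a be integers with gcd(a,b) = 1, let m ≥ 1 be an integer, and let c0 be an integer. For an integer c', let u(c') denote the binary word of length m whose k-th letter (0 ≤ k ≤ m−1) is ⌊(b(k+1)+c')/a⌋ − ⌊(bk+c')/a⌋. Then there exist integers c1 and c2 with 0 ≤ c1 ≤ c2 < a such that for every integer c', u(c') = u(c0) if and only if the residue of c' modulo a lies in the interval [c1, c2]. -/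
/-- The `k`-th letter `⌊(b(k+1)+c)/a⌋ - ⌊(bk+c)/a⌋` of the word defined by the line
`y = (b/a)x + c/a`. -/
noncomputable def lineLetter (a b c : ℤ) (k : ℕ) : ℤ :=
  ⌊((b * ((k : ℤ) + 1) + c : ℤ) : ℝ) / (a : ℝ)⌋ - ⌊((b * (k : ℤ) + c : ℤ) : ℝ) / (a : ℝ)⌋

theorem lineLetter_eq_ediv (a b c : ℤ) (ha : 0 ≤ a) (k : ℕ) :
    lineLetter a b c k = (b * ((k : ℤ) + 1) + c) / a - (b * (k : ℤ) + c) / a := by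
  lift a to ℕ using ha
  simp only [lineLetter, Int.cast_natCast, Int.floor_div_natCast, Int.floor_intCast]

/-- Two lines have the same letters up to `m` iff the residues of their intercepts have the same
prefix heights up to `m`. -/
theorem forall_lineLetter_eq_iff (a b : ℤ) (ha : 0 < a) (m : ℕ) (c d : ℤ) :
    (∀ k : ℕ, k < m → lineLetter a b c k = lineLetter a b d k) ↔
      ∀ k : ℕ, k ≤ m → (b * (k : ℤ) + c % a) / a = (b * (k : ℤ) + d % a) / a := by
  have height (e : ℤ) (k : ℤ) : (b * k + e) / a = (b * k + e % a) / a + e / a := by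
    rw [← Int.add_mul_ediv_right _ _ ha.ne']
    congr 1
    linarith [Int.emod_add_mul_ediv e a]
  simp only [lineLetter_eq_ediv a b _ ha.le, height c, height d]
  constructor
  · intro h k
    induction k with
    | zero => simp [Int.emod_nonneg, Int.emod_lt_of_pos, ha, Int.ediv_eq_zero_of_lt, ha.ne']
    | succ k ih =>
      intro hk
      have step := h k (by omega)
      have prev := ih (by omega)
      push_cast
      linarith
  · intro h k hk
    have prev := h k hk.le
    have next := h (k + 1) hk
    push_cast at next
    linarith

/-- The lines `y = (b/a)x + c'/a` representing the same word of length `m` as the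
line with `c' = c0` are exactly those whose `c'` has residue mod `a` in an
interval `[c1, c2] ⊆ [0, a)`. -/
theorem same_word_interval (a b : ℤ) (ha : 1 ≤ a) (hb0 : 0 ≤ b) (hba : b < a)
    (hgcd : Int.gcd a b = 1) (m : ℕ) (hm : 1 ≤ m) (c0 : ℤ) :
    ∃ c1 c2 : ℤ, 0 ≤ c1 ∧ c1 ≤ c2 ∧ c2 < a ∧
      ∀ c' : ℤ,
        (∀ k : ℕ, k < m → lineLetter a b c' k = lineLetter a b c0 k) ↔
          (c1 ≤ c' % a ∧ c' % a ≤ c2) := by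
  have ha' : 0 < a := ha
  let heightsAgree (r : ℤ) : Prop :=
    ∀ k : ℕ, k ≤ m → (b * (k : ℤ) + r) / a = (b * (k : ℤ) + c0 % a) / a
  classical
  let S : Finset ℤ := (Finset.Ico 0 a).filter heightsAgree
  have mem_S (r : ℤ) : r ∈ S ↔ (0 ≤ r ∧ r < a) ∧ heightsAgree r := by
    simp only [S, Finset.mem_filter, Finset.mem_Ico]
  have hS : S.Nonempty :=
    ⟨c0 % a, (mem_S _).2
      ⟨⟨Int.emod_nonneg _ ha'.ne', Int.emod_lt_of_pos _ ha'⟩, fun _ _ => rfl⟩⟩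
  have hmin := (mem_S _).1 (S.min'_mem hS)
  have hmax := (mem_S _).1 (S.max'_mem hS)
  refine ⟨S.min' hS, S.max' hS, hmin.1.1, S.min'_le _ (S.max'_mem hS), hmax.1.2, fun c' => ?_⟩
  rw [forall_lineLetter_eq_iff a b ha']
  constructor
  · intro h
    have hmem : c' % a ∈ S :=
      (mem_S _).2 ⟨⟨Int.emod_nonneg _ ha'.ne', Int.emod_lt_of_pos _ ha'⟩, h⟩
    exact ⟨S.min'_le _ hmem, S.le_max' _ hmem⟩
  · rintro ⟨h1, h2⟩ k hk
    apply le_antisymm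
    · rw [← hmax.2 k hk]
      exact Int.ediv_le_ediv ha' (by linarith)
    · rw [← hmin.2 k hk]
      exact Int.ediv_le_ediv ha' (by linarith)
end

section
/- Let w = w_0 w_1 ⋯ w_{n−1} be a word over the alphabet {0,1}. Then w is a factor of some Sturmian infinite word if and only if there exist real numbers α ∈ (0,1) and ρ ∈ (0,1) such that w_k = ⌊(k+1)α + ρ⌋ − ⌊kα + ρ⌋ for all 0 ≤ k ≤ n−1. -/
open Filter Topology

/-- The factor of length `n` of `ω` that starts at position `a`. -/
def window (ω : ℕ → Bool) (n a : ℕ) : Fin n → Bool := fun k => ω (a + k)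

/-- The number of letters `1` among the first `n` letters of `ω`. -/
def countOnes (ω : ℕ → Bool) (n : ℕ) : ℤ := ∑ t ∈ Finset.range n, if ω t then 1 else 0

/-- Any two factors of `ω` of equal length differ by at most one in their number of `1`s. -/
def IsBalanced (ω : ℕ → Bool) : Prop :=
  ∀ m i j, countOnes ω (j + m) - countOnes ω j ≤ countOnes ω (i + m) - countOnes ω i + 1

theorem window_eq_iff {ω : ℕ → Bool} {n a b : ℕ} :
    window ω n a = window ω n b ↔ ∀ k < n, ω (a + k) = ω (b + k) :=
  ⟨fun h k hk => congrFun h ⟨k, hk⟩, fun h => funext fun k => h k k.2⟩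

theorem isSturmian_iff_ncard_range_window {ω : ℕ → Bool} :
    IsSturmian ω ↔ ∀ n, (Set.range (window ω n)).ncard = n + 1 := by
  refine forall_congr' fun n => ?_
  have h : {u : List Bool | u.length = n ∧ IsFactor u ω}
      = List.ofFn '' Set.range (window ω n) := by
    ext u
    constructor
    · rintro ⟨rfl, i, hi⟩
      refine ⟨_, ⟨i, rfl⟩, ?_⟩
      apply List.ext_get
      · simp
      · intro k h₁ h₂
        rw [hi k h₂]
        simp [window]
    · rintro ⟨_, ⟨i, rfl⟩, rfl⟩
      refine ⟨by simp, i, fun k hk => ?_⟩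
      simp [window]
  rw [h, Set.ncard_image_of_injective _ List.ofFn_injective]

theorem countOnes_succ (ω : ℕ → Bool) (n : ℕ) :
    countOnes ω (n + 1) = countOnes ω n + if ω n then 1 else 0 :=
  Finset.sum_range_succ _ _

/-! ### Sturmian words are balanced -/

/-- Exactly one factor of length `n` of a Sturmian word is right special. -/
theorem IsSturmian.exists_right_special {ω : ℕ → Bool} (hω : IsSturmian ω) (n : ℕ) :
    ∃ a b, window ω n a = window ω n b ∧ ω (a + n) ≠ ω (b + n) ∧
      ∀ c d, window ω n c = window ω n d → window ω n c ≠ window ω n a →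
        ω (c + n) = ω (d + n) := by
  rw [isSturmian_iff_ncard_range_window] at hω
  have eq_of : ∀ a b, window ω n a = window ω n b → ω (a + n) = ω (b + n) →
      window ω (n + 1) a = window ω (n + 1) b := by
    intro a b h h'
    rw [window_eq_iff] at h ⊢
    intro k hk
    rcases Nat.lt_succ_iff_lt_or_eq.1 hk with h1 | rfl
    exacts [h k h1, h']
  have ne_of : ∀ a b, ω (a + n) ≠ ω (b + n) →
      window ω (n + 1) a ≠ window ω (n + 1) b := by
    intro a b h h'
    exact h (window_eq_iff.1 h' n (Nat.lt_succ_self n))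
  obtain ⟨a, b, hab, hne⟩ : ∃ a b, window ω n a = window ω n b ∧ ω (a + n) ≠ ω (b + n) := by
    by_contra! hcon
    have hinj : Set.InjOn (Fin.init (α := fun _ => Bool)) (Set.range (window ω (n + 1))) := by
      rintro _ ⟨a, rfl⟩ _ ⟨b, rfl⟩ h
      exact eq_of a b h (hcon a b h)
    have himg : Fin.init (α := fun _ => Bool) '' Set.range (window ω (n + 1))
        = Set.range (window ω n) := by
      rw [← Set.range_comp]; rfl
    have := hinj.ncard_image
    rw [himg, hω, hω] at this
    omega
  refine ⟨a, b, hab, hne, fun c d hcd hca => ?_⟩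
  by_contra hne'
  have hbd : window ω (n + 1) b ≠ window ω (n + 1) d := fun h => hca <| by
    rw [hcd, hab]; exact (congrArg Fin.init h).symm
  have hsub : Set.range (window ω n) ⊆ Fin.init (α := fun _ => Bool) ''
      (Set.range (window ω (n + 1)) \ {window ω (n + 1) b, window ω (n + 1) d}) := by
    have key : ∀ e, window ω (n + 1) e ≠ window ω (n + 1) b →
        window ω (n + 1) e ≠ window ω (n + 1) d →
        window ω n e ∈ Fin.init (α := fun _ => Bool) ''
      (Set.range (window ω (n + 1)) \ {window ω (n + 1) b, window ω (n + 1) d}) :=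
      fun e h1 h2 => ⟨_, ⟨⟨e, rfl⟩, by simp [h1, h2]⟩, rfl⟩
    rintro _ ⟨e, rfl⟩
    by_cases h1 : window ω (n + 1) e = window ω (n + 1) b
    · have : window ω n e = window ω n a := by
        rw [hab]; exact congrArg Fin.init h1
      rw [this]
      refine key a (ne_of _ _ hne) fun h => hca ?_
      rw [hcd]; exact (congrArg Fin.init h).symm
    by_cases h2 : window ω (n + 1) e = window ω (n + 1) d
    · have : window ω n e = window ω n c := by
        rw [hcd]; exact congrArg Fin.init h2
      rw [this]
      refine key c (fun h => hca ?_) (ne_of _ _ hne')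
      rw [hab]; exact congrArg Fin.init h
    exact key e h1 h2
  have h1 := Set.ncard_le_ncard hsub (Set.toFinite _)
  have h2 := Set.ncard_image_le (f := Fin.init (α := fun _ => Bool)) (Set.toFinite
    (Set.range (window ω (n + 1)) \ {window ω (n + 1) b, window ω (n + 1) d}))
  rw [Set.ncard_sdiff (by rintro _ (rfl | rfl) <;> exact ⟨_, rfl⟩) (Set.toFinite _),
    Set.ncard_pair hbd, hω] at h2
  rw [hω] at h1
  omega

/-- A Sturmian word is not eventually periodic. -/
theorem IsSturmian.not_eventually_periodic {ω : ℕ → Bool} (hω : IsSturmian ω) {p q : ℕ}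
    (hpq : p < q) : ¬ ∀ t, ω (p + t) = ω (q + t) := by
  intro hper
  rw [isSturmian_iff_ncard_range_window] at hω
  have hrep : ∀ t, ∃ s < q, window ω q t = window ω q s := by
    intro t
    induction t using Nat.strong_induction_on with
    | _ t ih =>
      by_cases ht : t < q
      · exact ⟨t, ht, rfl⟩
      obtain ⟨s, hs, h⟩ := ih (t - (q - p)) (by omega)
      refine ⟨s, hs, h ▸ window_eq_iff.2 fun k _ => ?_⟩
      have := hper (t - q + k)
      rw [show p + (t - q + k) = t - (q - p) + k by omega,
        show q + (t - q + k) = t + k by omega] at this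
      exact this.symm
  have hsub : Set.range (window ω q) ⊆ window ω q '' (Finset.range q : Set ℕ) := by
    rintro _ ⟨t, rfl⟩
    obtain ⟨s, hs, h⟩ := hrep t
    exact ⟨s, by simpa using hs, h.symm⟩
  have h1 := Set.ncard_le_ncard hsub (Set.toFinite _)
  have h2 := Set.ncard_image_le (f := window ω q) (Finset.range q).finite_toSet
  rw [Set.ncard_coe_finset, Finset.card_range] at h2
  rw [hω] at h1
  omega

/-- The right special factor of length `n` of a Sturmian word occurs at one of any `n + 1`
consecutive positions. -/
theorem IsSturmian.exists_window_eq {ω : ℕ → Bool} (hω : IsSturmian ω) {n r : ℕ}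
    (hr : ∀ c d, window ω n c = window ω n d → window ω n c ≠ window ω n r →
      ω (c + n) = ω (d + n)) (x : ℕ) :
    ∃ t ≤ n, window ω n (x + t) = window ω n r := by
  by_contra! hcon
  obtain ⟨p, q, hp, hpq, hq, heq⟩ : ∃ p q, x ≤ p ∧ p < q ∧ q ≤ x + n ∧
      window ω n p = window ω n q := by
    have hmaps : ∀ t ∈ Finset.range (n + 1), window ω n (x + t) ∈
        ((Set.range (window ω n)) \ {window ω n r}).toFinite.toFinset := by
      intro t ht
      simpa using hcon t (by simpa [Nat.lt_succ_iff] using ht)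
    have hcard : ((Set.range (window ω n)) \ {window ω n r}).toFinite.toFinset.card
        < (Finset.range (n + 1)).card := by
      rw [← Set.ncard_eq_toFinset_card, Set.ncard_sdiff (by simp) (Set.toFinite _),
        Set.ncard_singleton, isSturmian_iff_ncard_range_window.1 hω]
      simp
    obtain ⟨s, hs, t, ht, hst, h⟩ :=
      Finset.exists_ne_map_eq_of_card_lt_of_maps_to hcard hmaps
    simp only [Finset.mem_range] at hs ht
    rcases lt_or_gt_of_ne hst with hlt | hlt
    · exact ⟨x + s, x + t, by omega, by omega, by omega, h⟩
    · exact ⟨x + t, x + s, by omega, by omega, by omega, h.symm⟩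
  have step : ∀ c d, window ω n c = window ω n d → window ω n c ≠ window ω n r →
      window ω n (c + 1) = window ω n (d + 1) := by
    intro c d h hne
    have hn := hr c d h hne
    rw [window_eq_iff] at h ⊢
    intro k hk
    rcases Nat.lt_or_eq_of_le (Nat.succ_le_of_lt hk) with h1 | rfl
    · simpa [add_assoc, add_comm 1] using h (k + 1) h1
    · simpa [add_assoc, add_comm 1] using hn
  have hall : ∀ t, window ω n (p + t) = window ω n (q + t) ∧
      window ω n (p + t) ≠ window ω n r := by
    intro t
    induction t using Nat.strong_induction_on with
    | _ t ih =>
      constructor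
      · cases t with
        | zero => exact heq
        | succ t => exact step _ _ (ih t (by omega)).1 (ih t (by omega)).2
      · by_cases ht : t < q - p
        · have := hcon (p + t - x) (by omega)
          rwa [show x + (p + t - x) = p + t by omega] at this
        · obtain ⟨h1, h2⟩ := ih (t - (q - p)) (by omega)
          rwa [h1, show q + (t - (q - p)) = p + t by omega] at h2
  refine hω.not_eventually_periodic (Nat.add_lt_add_right hpq n) fun t => ?_
  have := hr _ _ (hall t).1 (hall t).2
  rwa [add_right_comm p, add_right_comm q] at this

theorem IsSturmian.isBalanced {ω : ℕ → Bool} (hω : IsSturmian ω) : IsBalanced ω := by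
  intro m
  induction m using Nat.strong_induction_on with
  | _ m ih =>
  intro i j
  by_contra! hcon
  have letter_nonneg : ∀ a, countOnes ω a ≤ countOnes ω (a + 1) := by
    intro a; rw [countOnes_succ]; split_ifs <;> simp
  have letter_le : ∀ a, countOnes ω (a + 1) ≤ countOnes ω a + 1 := by
    intro a; rw [countOnes_succ]; split_ifs <;> simp
  have letter_eq : ∀ a b,
      countOnes ω (a + 1) - countOnes ω a = countOnes ω (b + 1) - countOnes ω b → ω a = ω b := by
    intro a b h
    rw [countOnes_succ, countOnes_succ] at h
    cases ha : ω a <;> cases hb : ω b <;> simp [ha, hb] at h ⊢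
  have letter_lt : ∀ a b,
      countOnes ω (a + 1) - countOnes ω a < countOnes ω (b + 1) - countOnes ω b → ω a = false ∧ ω b = true := by
    intro a b h
    rw [countOnes_succ, countOnes_succ] at h
    cases ha : ω a <;> cases hb : ω b <;> simp [ha, hb] at h ⊢
  obtain ⟨n, rfl⟩ : ∃ n, m = n + 2 := by
    refine ⟨m - 2, ?_⟩
    by_contra hm
    obtain rfl | rfl : m = 0 ∨ m = 1 := by omega
    · simp at hcon
    · have := letter_nonneg i
      have := letter_le j
      omega
  -- By minimality, the two factors differ exactly in their first and last letters.
  have hdiff : ∀ k, 0 < k → k < n + 2 →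
      countOnes ω (j + k) - countOnes ω j = countOnes ω (i + k) - countOnes ω i + 1 := by
    intro k hk hkn
    have h1 := ih k hkn i j
    have h2 := ih (n + 2 - k) (by omega) (i + k) (j + k)
    rw [show j + k + (n + 2 - k) = j + (n + 2) by omega,
      show i + k + (n + 2 - k) = i + (n + 2) by omega] at h2
    omega
  have hlast : countOnes ω (j + (n + 2)) - countOnes ω j
      = countOnes ω (i + (n + 2)) - countOnes ω i + 2 := by
    have h1 := hdiff (n + 1) (by omega) (by omega)
    have h2 := letter_nonneg (i + (n + 1))
    have h3 := letter_le (j + (n + 1))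
    simp only [add_assoc, Nat.reduceAdd] at *
    omega
  obtain ⟨hi, hj⟩ : ω i = false ∧ ω j = true := by
    refine letter_lt i j ?_
    have := hdiff 1 (by omega) (by omega)
    omega
  obtain ⟨hi', hj'⟩ : ω (i + (n + 1)) = false ∧ ω (j + (n + 1)) = true := by
    refine letter_lt _ _ ?_
    have h1 := hdiff (n + 1) (by omega) (by omega)
    simp only [add_assoc, Nat.reduceAdd] at *
    omega
  have hmid : ∀ k, 0 < k → k < n + 1 → ω (i + k) = ω (j + k) := by
    intro k hk hkn
    have h1 := hdiff k hk (by omega)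
    have h2 := hdiff (k + 1) (by omega) (by omega)
    refine letter_eq _ _ ?_
    simp only [add_assoc] at *
    omega
  -- The common middle part is a palindrome.
  have hrefl : ∀ k, 0 < k → k < n + 2 → countOnes ω (i + k) - countOnes ω i
      = countOnes ω (i + (n + 2)) - countOnes ω (i + (n + 2 - k)) := by
    intro k hk hkn
    have h1 := ih k hkn (i + (n + 2 - k)) j
    have h2 := ih k hkn i (j + (n + 2 - k))
    rw [add_assoc, show n + 2 - k + k = n + 2 by omega] at h1 h2
    have h3 := hdiff k hk hkn
    have h4 := hdiff (n + 2 - k) (by omega) (by omega)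
    omega
  have hpal : ∀ k, 0 < k → k < n + 1 → ω (i + (n + 1 - k)) = ω (i + k) := by
    intro k hk hkn
    have h1 := hrefl k hk (by omega)
    have h2 := hrefl (k + 1) (by omega) (by omega)
    refine letter_eq _ _ ?_
    rw [show n + 2 - (k + 1) = n + 1 - k by omega] at h2
    rw [show n + 2 - k = n + 1 - k + 1 by omega] at h1
    simp only [add_assoc] at *
    omega
  obtain ⟨r, r', hrr, hne, hr⟩ := hω.exists_right_special (n + 1)
  have hsuffix : window ω n (r + 1) = window ω n (i + 1) := by
    obtain ⟨a, b, -, -, ha⟩ := hω.exists_right_special n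
    have hi1 : window ω n (i + 1) = window ω n a := by
      by_contra h
      have := ha (i + 1) (j + 1) (window_eq_iff.2 fun k hk => ?_) h
      · rw [add_assoc, add_comm 1 n, hi', add_assoc, add_comm 1 n, hj'] at this
        cases this
      · have := hmid (k + 1) (by omega) (by omega)
        rwa [add_comm k, ← add_assoc, ← add_assoc] at this
    have hr1 : window ω n (r + 1) = window ω n a := by
      by_contra h
      have := ha (r + 1) (r' + 1) (window_eq_iff.2 fun k hk => ?_) h
      · rw [add_assoc, add_comm 1 n, add_assoc, add_comm 1 n] at this
        exact hne this
      · have := window_eq_iff.1 hrr (k + 1) (by omega)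
        rwa [add_comm k, ← add_assoc, ← add_assoc] at this
    rw [hi1, hr1]
  have hri : ∀ k, 0 < k → k < n + 1 → ω (r + k) = ω (i + k) := by
    intro k hk hkn
    have := window_eq_iff.1 hsuffix (k - 1) (by omega)
    rwa [add_assoc, add_assoc, show 1 + (k - 1) = k by omega] at this
  have main : ∀ x c, ω r = !c → ω x = c → ω (x + (n + 1)) = c →
      (∀ k, 0 < k → k < n + 1 → ω (i + k) = ω (x + k)) → False := by
    intro x c hrc hx hx' hxi
    obtain ⟨t, ht, hw⟩ := hω.exists_window_eq hr x
    rw [window_eq_iff] at hw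
    have h0 := hw 0 (by omega)
    rw [add_zero, add_zero, hrc] at h0
    obtain rfl | rfl | ⟨ht0, htn⟩ : t = 0 ∨ t = n + 1 ∨ (0 < t ∧ t < n + 1) := by omega
    · rw [add_zero, hx] at h0
      cases c <;> cases h0
    · rw [hx'] at h0
      cases c <;> cases h0
    · have h1 := hw (n + 1 - t) (by omega)
      rw [add_assoc, show t + (n + 1 - t) = n + 1 by omega, hx',
        hri _ (by omega) (by omega), hpal t ht0 htn, hxi t ht0 htn, h0] at h1
      cases c <;> cases h1
  cases hr0 : ω r
  · exact main j true hr0 hj hj' hmid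
  · exact main i false hr0 hi hi' fun _ _ _ => rfl

/-! ### Factors of balanced words are defined by lines -/

theorem IsBalanced.mul_lt_mul {ω : ℕ → Bool} (hω : IsBalanced ω) :
    ∀ N a b : ℕ, a + b ≤ N → 0 < a → 0 < b → ∀ x y,
      (b : ℤ) * (countOnes ω (x + a) - countOnes ω x - 1)
        < a * (countOnes ω (y + b) - countOnes ω y + 1) := by
  intro N
  induction N with
  | zero => intros; omega
  | succ N ih =>
    intro a b hab ha hb x y
    rcases lt_trichotomy a b with h | rfl | h
    · obtain ⟨t, rfl⟩ := Nat.exists_eq_add_of_lt h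
      have h1 := ih a (t + 1) (by omega) ha (by omega) x (y + a)
      have h2 := hω a y x
      rw [show y + a + (t + 1) = y + (a + t + 1) by omega] at h1
      push_cast at h1 ⊢
      nlinarith
    · have h1 := hω a y x
      have : (0 : ℤ) < a := by exact_mod_cast ha
      nlinarith
    · obtain ⟨t, rfl⟩ := Nat.exists_eq_add_of_lt h
      have h1 := ih (t + 1) b (by omega) (by omega) hb (x + b) y
      have h2 := hω b y x
      rw [show x + b + (t + 1) = x + (b + t + 1) by omega] at h1
      push_cast at h1 ⊢
      nlinarith

theorem countOnes_mono (ω : ℕ → Bool) : Monotone (countOnes ω) :=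
  monotone_nat_of_le_succ fun n => by rw [countOnes_succ]; split_ifs <;> simp

theorem countOnes_add_le (ω : ℕ → Bool) (x a : ℕ) : countOnes ω (x + a) ≤ countOnes ω x + a := by
  induction a with
  | zero => simp
  | succ a ih =>
    rw [← add_assoc, countOnes_succ]
    push_cast
    split_ifs <;> linarith

/-- The slope of a line that follows the prefix of length `N` of a balanced word. -/
theorem IsBalanced.exists_slope {ω : ℕ → Bool} (hω : IsBalanced ω) (N : ℕ) :
    ∃ α ∈ Set.Ioo (0 : ℝ) 1, ∀ x a : ℕ, 0 < a → x + a ≤ N →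
      (countOnes ω (x + a) - countOnes ω x - 1 : ℝ) < a * α ∧
      a * α < (countOnes ω (x + a) - countOnes ω x + 1 : ℝ) := by
  classical
  let s := (Finset.range (N + 1) ×ˢ Finset.Icc 1 N)
  obtain ⟨α, h1, h2⟩ := Order.exists_between_finsets
    (insert 0 (s.image fun p => (countOnes ω (p.1 + p.2) - countOnes ω p.1 - 1 : ℝ) / p.2))
    (insert 1 (s.image fun p => (countOnes ω (p.1 + p.2) - countOnes ω p.1 + 1 : ℝ) / p.2)) (by
      simp only [Finset.mem_insert, Finset.mem_image, s, Finset.mem_product, Finset.mem_Icc]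
      rintro _ (rfl | ⟨⟨x, a⟩, ⟨-, ha, -⟩, rfl⟩) _ (rfl | ⟨⟨y, b⟩, ⟨-, hb, -⟩, rfl⟩)
      · norm_num
      · have hb' : (0 : ℝ) < b := by exact_mod_cast hb
        have : (countOnes ω y : ℝ) ≤ countOnes ω (y + b) := by
          exact_mod_cast countOnes_mono ω (Nat.le_add_right y b)
        apply div_pos _ hb'
        dsimp only
        linarith
      · have ha' : (0 : ℝ) < a := by exact_mod_cast ha
        have : (countOnes ω (x + a) : ℝ) ≤ countOnes ω x + a := by
          exact_mod_cast countOnes_add_le ω x a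
        rw [div_lt_one ha']
        linarith
      · have ha' : (0 : ℝ) < a := by exact_mod_cast ha
        have hb' : (0 : ℝ) < b := by exact_mod_cast hb
        rw [div_lt_div_iff₀ ha' hb', mul_comm, mul_comm _ (a : ℝ)]
        exact_mod_cast hω.mul_lt_mul _ a b le_rfl ha hb x y)
  refine ⟨α, ⟨h1 0 (by simp), h2 1 (by simp)⟩, fun x a ha hxa => ?_⟩
  have ha' : (0 : ℝ) < a := by exact_mod_cast ha
  have hmem : (x, a) ∈ s := by
    simp only [s, Finset.mem_product, Finset.mem_range, Finset.mem_Icc]; omega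
  have h3 := h1 _ (Finset.mem_insert_of_mem (Finset.mem_image_of_mem _ hmem))
  have h4 := h2 _ (Finset.mem_insert_of_mem (Finset.mem_image_of_mem _ hmem))
  rw [div_lt_iff₀' ha'] at h3
  rw [lt_div_iff₀' ha'] at h4
  exact ⟨h3, h4⟩

theorem IsBalanced.exists_line {ω : ℕ → Bool} (hω : IsBalanced ω) (p n : ℕ) :
    ∃ α ρ : ℝ, α ∈ Set.Ioo (0 : ℝ) 1 ∧ ρ ∈ Set.Ioo (0 : ℝ) 1 ∧
      ∀ k ≤ n, ⌊(k : ℝ) * α + ρ⌋ = countOnes ω (p + k) - countOnes ω p := by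
  classical
  obtain ⟨α, hα, hslope⟩ := hω.exists_slope (p + n)
  obtain ⟨ρ, h1, h2⟩ := Order.exists_between_finsets
    ((Finset.range (n + 1)).image fun k : ℕ =>
      (countOnes ω (p + k) - countOnes ω p - k * α : ℝ))
    ((Finset.range (n + 1)).image fun k : ℕ =>
      (countOnes ω (p + k) - countOnes ω p + 1 - k * α : ℝ)) (by
      simp only [Finset.mem_image, Finset.mem_range]
      rintro _ ⟨k, hk, rfl⟩ _ ⟨l, hl, rfl⟩
      rcases lt_trichotomy k l with h | rfl | h
      · obtain ⟨t, rfl⟩ := Nat.exists_eq_add_of_lt h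
        have := (hslope (p + k) (t + 1) (by omega) (by omega)).2
        rw [show p + k + (t + 1) = p + (k + t + 1) by omega] at this
        push_cast at this ⊢
        linarith
      · linarith
      · obtain ⟨t, rfl⟩ := Nat.exists_eq_add_of_lt h
        have := (hslope (p + l) (t + 1) (by omega) (by omega)).1
        rw [show p + l + (t + 1) = p + (l + t + 1) by omega] at this
        push_cast at this ⊢
        linarith)
  have hρ : ∀ k ≤ n, (countOnes ω (p + k) - countOnes ω p - k * α : ℝ) < ρ ∧
      ρ < (countOnes ω (p + k) - countOnes ω p + 1 - k * α : ℝ) := fun k hk =>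
    ⟨h1 _ (Finset.mem_image_of_mem _ (by simpa [Nat.lt_succ_iff] using hk)),
      h2 _ (Finset.mem_image_of_mem _ (by simpa [Nat.lt_succ_iff] using hk))⟩
  refine ⟨α, ρ, hα, ?_, fun k hk => ?_⟩
  · simpa using hρ 0 (Nat.zero_le n)
  · rw [Int.floor_eq_iff]
    push_cast
    constructor <;> linarith [(hρ k hk).1, (hρ k hk).2]

theorem IsBalanced.exists_definesWord {ω : ℕ → Bool} (hω : IsBalanced ω) {w : List Bool}
    (hw : IsFactor w ω) : ∃ α ρ : ℝ, α ∈ Set.Ioo (0 : ℝ) 1 ∧ ρ ∈ Set.Ioo (0 : ℝ) 1 ∧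
      DefinesWord α ρ w := by
  obtain ⟨p, hp⟩ := hw
  obtain ⟨α, ρ, hα, hρ, h⟩ := hω.exists_line p w.length
  refine ⟨α, ρ, hα, hρ, fun k hk => ?_⟩
  have h1 := h (k + 1) hk
  push_cast at h1
  rw [h1, h k hk.le, hp k hk, ← add_assoc, countOnes_succ]
  ring

/-! ### Mechanical words of irrational slope are Sturmian -/

/-- The infinite word `⌊(k+1)α+ρ⌋ - ⌊kα+ρ⌋`. -/
noncomputable def mechanicalWord (α ρ : ℝ) (k : ℕ) : Bool :=
  decide (⌊((k : ℝ) + 1) * α + ρ⌋ - ⌊(k : ℝ) * α + ρ⌋ = 1)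

theorem ite_mechanicalWord {α : ℝ} (hα : α ∈ Set.Ioo (0 : ℝ) 1) (ρ : ℝ) (k : ℕ) :
    (if mechanicalWord α ρ k then (1 : ℤ) else 0)
      = ⌊((k : ℝ) + 1) * α + ρ⌋ - ⌊(k : ℝ) * α + ρ⌋ := by
  have h1 : ⌊(k : ℝ) * α + ρ⌋ ≤ ⌊((k : ℝ) + 1) * α + ρ⌋ :=
    Int.floor_mono (by linarith [hα.1])
  have h2 : ⌊((k : ℝ) + 1) * α + ρ⌋ ≤ ⌊(k : ℝ) * α + ρ⌋ + 1 := by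
    rw [← Int.floor_add_one]
    exact Int.floor_mono (by linarith [hα.2])
  simp only [mechanicalWord, decide_eq_true_eq]
  split_ifs <;> omega

/-- The thresholds at which the length `n` factor read at intercept `θ` changes. -/
noncomputable def breakpoints (α : ℝ) (n : ℕ) : Finset ℝ :=
  (Finset.Icc 1 n).image fun k : ℕ => 1 - Int.fract ((k : ℝ) * α)

theorem card_breakpoints {α : ℝ} (hα : Irrational α) (n : ℕ) : (breakpoints α n).card = n := by
  rw [breakpoints, Finset.card_image_of_injective, Nat.card_Icc, Nat.add_sub_cancel]
  intro k l h
  have h' : Int.fract ((k : ℝ) * α) = Int.fract ((l : ℝ) * α) := by linarith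
  obtain ⟨z, hz⟩ := Int.fract_eq_fract.1 h'
  by_contra hkl
  refine (hα.intCast_mul (m := (k : ℤ) - l) (sub_ne_zero.2 (by exact_mod_cast hkl))).ne_int z ?_
  push_cast
  linarith

theorem floor_add_eq_ite (x : ℝ) {θ : ℝ} (hθ : θ ∈ Set.Ico (0 : ℝ) 1) :
    ⌊x + θ⌋ = ⌊x⌋ + if 1 - Int.fract x ≤ θ then 1 else 0 := by
  have h := Int.floor_add_fract x
  have h0 := Int.fract_nonneg x
  have h1 := Int.fract_lt_one x
  obtain ⟨h2, h3⟩ := hθ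
  rw [Int.floor_eq_iff]
  split_ifs <;> push_cast <;> constructor <;> linarith

theorem floor_mul_add_eq (α ρ : ℝ) (i k : ℕ) :
    ⌊((i + k : ℕ) : ℝ) * α + ρ⌋
      = ⌊(i : ℝ) * α + ρ⌋ + ⌊(k : ℝ) * α + Int.fract ((i : ℝ) * α + ρ)⌋ := by
  rw [← Int.floor_intCast_add, Int.fract]
  congr 1
  push_cast
  ring

theorem window_mechanicalWord_eq_iff_floor {α : ℝ} (hα : α ∈ Set.Ioo (0 : ℝ) 1) (ρ : ℝ)
    (n i j : ℕ) : window (mechanicalWord α ρ) n i = window (mechanicalWord α ρ) n j ↔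
      ∀ k ≤ n, ⌊(k : ℝ) * α + Int.fract ((i : ℝ) * α + ρ)⌋
        = ⌊(k : ℝ) * α + Int.fract ((j : ℝ) * α + ρ)⌋ := by
  have key : ∀ i k : ℕ, (if mechanicalWord α ρ (i + k) then (1 : ℤ) else 0) =
      ⌊((k + 1 : ℕ) : ℝ) * α + Int.fract ((i : ℝ) * α + ρ)⌋
        - ⌊(k : ℝ) * α + Int.fract ((i : ℝ) * α + ρ)⌋ := by
    intro i k
    have h1 := floor_mul_add_eq α ρ i k
    have h2 := floor_mul_add_eq α ρ i (k + 1)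
    rw [ite_mechanicalWord hα, h1,
      show ((i + k : ℕ) : ℝ) + 1 = ((i + (k + 1) : ℕ) : ℝ) by push_cast; ring, h2]
    ring
  rw [window_eq_iff]
  constructor
  · intro h k
    induction k with
    | zero => intro _; simp
    | succ k ih =>
      intro hk
      have h1 := key i k
      have h2 := key j k
      rw [h k hk] at h1
      have := ih (by omega)
      omega
  · intro h k hk
    have h1 := key i k
    have h2 := key j k
    rw [h k hk.le, h (k + 1) hk, ← h2] at h1
    cases ha : mechanicalWord α ρ (i + k) <;> cases hb : mechanicalWord α ρ (j + k) <;>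
      simp [ha, hb] at h1 ⊢

theorem window_mechanicalWord_eq_iff {α : ℝ} (hα : α ∈ Set.Ioo (0 : ℝ) 1) (ρ : ℝ) (n i j : ℕ) :
    window (mechanicalWord α ρ) n i = window (mechanicalWord α ρ) n j ↔
      ((breakpoints α n).filter (· ≤ Int.fract ((i : ℝ) * α + ρ))).card
        = ((breakpoints α n).filter (· ≤ Int.fract ((j : ℝ) * α + ρ))).card := by
  rw [window_mechanicalWord_eq_iff_floor hα]
  have hmem : ∀ i : ℕ, Int.fract ((i : ℝ) * α + ρ) ∈ Set.Ico (0 : ℝ) 1 := fun i =>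
    ⟨Int.fract_nonneg _, Int.fract_lt_one _⟩
  have hfilter : ∀ θ θ' : ℝ, ((breakpoints α n).filter (· ≤ θ)).card
      = ((breakpoints α n).filter (· ≤ θ')).card →
      (breakpoints α n).filter (· ≤ θ) = (breakpoints α n).filter (· ≤ θ') := by
    intro θ θ' h
    rcases le_total θ θ' with hle | hle
    · exact Finset.eq_of_subset_of_card_le
        (Finset.monotone_filter_right _ fun x _ hx => hx.trans hle) h.ge
    · exact (Finset.eq_of_subset_of_card_le
        (Finset.monotone_filter_right _ fun x _ hx => hx.trans hle) h.le).symm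
  constructor
  · intro h
    congr 1
    refine Finset.filter_congr fun x hx => ?_
    obtain ⟨k, hk, rfl⟩ := Finset.mem_image.1 hx
    have := h k (Finset.mem_Icc.1 hk).2
    rw [floor_add_eq_ite _ (hmem i), floor_add_eq_ite _ (hmem j)] at this
    split_ifs at this <;> first | omega | tauto
  · intro h k hk
    have hiff := Finset.ext_iff.1 (hfilter _ _ h) (1 - Int.fract ((k : ℝ) * α))
    rw [floor_add_eq_ite _ (hmem i), floor_add_eq_ite _ (hmem j)]
    rcases Nat.eq_zero_or_pos k with rfl | hk0
    · simp [(hmem _).2.not_ge]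
    · have hb : 1 - Int.fract ((k : ℝ) * α) ∈ breakpoints α n :=
        Finset.mem_image_of_mem _ (Finset.mem_Icc.2 ⟨hk0, hk⟩)
      simp only [Finset.mem_filter, hb, true_and] at hiff
      simp only [hiff]

/-- Each value up to `B.card` is the number of elements of `B` below `θ`, for all `θ` in some
nonempty open subinterval of `(0, c)`. -/
theorem exists_Ioo_card_filter_le (B : Finset ℝ) : ∀ c : ℝ, 0 < c → (∀ b ∈ B, b ∈ Set.Ioo 0 c) →
    ∀ m ≤ B.card, ∃ x y, 0 ≤ x ∧ x < y ∧ y ≤ c ∧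
      ∀ θ ∈ Set.Ioo x y, (B.filter (· ≤ θ)).card = m := by
  induction B using Finset.induction_on_max with
  | empty =>
    intro c hc _ m hm
    exact ⟨0, c, le_rfl, hc, le_rfl, fun θ _ => by simpa [eq_comm] using hm⟩
  | insert b B hb ih =>
    intro c hc hB m hm
    have hbc := hB b (Finset.mem_insert_self _ _)
    have hbB : b ∉ B := fun h => (hb b h).false
    rw [Finset.card_insert_of_notMem hbB] at hm
    rcases Nat.lt_or_eq_of_le hm with hlt | rfl
    · obtain ⟨x, y, hx, hxy, hy, h⟩ := ih b hbc.1
        (fun z hz => ⟨(hB z (Finset.mem_insert_of_mem hz)).1, hb z hz⟩) m (by omega)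
      refine ⟨x, y, hx, hxy, hy.trans hbc.2.le, fun θ hθ => ?_⟩
      rw [Finset.filter_insert, if_neg (by linarith [hθ.2]), h θ hθ]
    · refine ⟨b, c, hbc.1.le, hbc.2, le_rfl, fun θ hθ => ?_⟩
      rw [Finset.filter_true_of_mem, Finset.card_insert_of_notMem hbB]
      intro z hz
      rcases Finset.mem_insert.1 hz with rfl | hz
      exacts [hθ.1.le, (hb z hz).le.trans hθ.1.le]

theorem exists_fract_mul_add_mem_Ioo {α : ℝ} (hα : Irrational α) (ρ : ℝ) {x y : ℝ} (hx : 0 ≤ x)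
    (hxy : x < y) (hy : y ≤ 1) : ∃ i : ℕ, Int.fract ((i : ℝ) * α + ρ) ∈ Set.Ioo x y := by
  have hdense : DenseRange fun i : ℕ => i • ((α : ℝ) : AddCircle (1 : ℝ)) := by
    rw [← denseRange_zsmul_iff_nsmul, AddCircle.denseRange_zsmul_coe_iff]
    simpa using hα
  have hopen : IsOpen ((fun r : ℝ => (r : AddCircle (1 : ℝ))) '' Set.Ioo (x - ρ) (y - ρ)) :=
    QuotientAddGroup.isOpenMap_coe _ isOpen_Ioo
  obtain ⟨i, r, hr, hri⟩ := hdense.exists_mem_open hopen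
    ((Set.nonempty_Ioo.2 (sub_lt_sub_right hxy ρ)).image _)
  rw [← AddCircle.coe_nsmul] at hri
  obtain ⟨z, hz⟩ := AddSubgroup.mem_zmultiples_iff.1 (QuotientAddGroup.eq.1 hri)
  simp only [zsmul_eq_mul, mul_one, nsmul_eq_mul] at hz
  refine ⟨i, ?_⟩
  have hfract : Int.fract ((i : ℝ) * α + ρ) = r + ρ :=
    Int.fract_eq_iff.2 ⟨by linarith [hr.1], by linarith [hr.2], z, by linarith⟩
  rw [hfract]
  constructor <;> linarith [hr.1, hr.2]

theorem isSturmian_mechanicalWord {α : ℝ} (hα : α ∈ Set.Ioo (0 : ℝ) 1) (hirr : Irrational α)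
    (ρ : ℝ) : IsSturmian (mechanicalWord α ρ) := by
  rw [isSturmian_iff_ncard_range_window]
  intro n
  let N : ℕ → ℕ := fun i =>
    ((breakpoints α n).filter (· ≤ Int.fract ((i : ℝ) * α + ρ))).card
  have hN : Set.range N = Finset.range (n + 1) := by
    ext m
    rw [Finset.mem_coe, Finset.mem_range, Nat.lt_succ_iff]
    constructor
    · rintro ⟨i, rfl⟩
      exact (Finset.card_filter_le _ _).trans (card_breakpoints hirr n).le
    · intro hm
      obtain ⟨x, y, hx, hxy, hy, h⟩ := exists_Ioo_card_filter_le (breakpoints α n) 1 one_pos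
        (fun b hb => by
          obtain ⟨k, hk, rfl⟩ := Finset.mem_image.1 hb
          have h1 : 0 < Int.fract ((k : ℝ) * α) := Int.fract_pos.2
            ((hirr.natCast_mul (Nat.one_le_iff_ne_zero.1 (Finset.mem_Icc.1 hk).1)).ne_int _)
          have h2 := Int.fract_lt_one ((k : ℝ) * α)
          constructor <;> linarith) m (by rwa [card_breakpoints hirr])
      obtain ⟨i, hi⟩ := exists_fract_mul_add_mem_Ioo hirr ρ hx hxy hy
      exact ⟨i, h _ hi⟩
  have hfactor : ∀ i j, window (mechanicalWord α ρ) n i = window (mechanicalWord α ρ) n j ↔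
      N i = N j := window_mechanicalWord_eq_iff hα ρ n
  have himage : Set.range (window (mechanicalWord α ρ) n)
      = (fun m => window (mechanicalWord α ρ) n (Function.invFun N m)) '' Set.range N := by
    rw [← Set.range_comp]
    congr 1
    funext i
    exact (hfactor _ _).2 (Function.invFun_eq ⟨i, rfl⟩).symm
  rw [himage, Set.InjOn.ncard_image, hN, Set.ncard_coe_finset, Finset.card_range]
  rintro _ ⟨i, rfl⟩ _ ⟨j, rfl⟩ h
  have := (hfactor _ _).1 h
  rwa [Function.invFun_eq (f := N) ⟨i, rfl⟩, Function.invFun_eq (f := N) ⟨j, rfl⟩] at this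

/-- The slope of a line defining a word may be taken irrational. -/
theorem exists_irrational_definesWord {α ρ : ℝ} (hα : α ∈ Set.Ioo (0 : ℝ) 1) {w : List Bool}
    (h : DefinesWord α ρ w) :
    ∃ β ∈ Set.Ioo (0 : ℝ) 1, Irrational β ∧ DefinesWord β ρ w := by
  have hev : ∀ᶠ β in 𝓝[>] α, ∀ k ∈ Finset.range (w.length + 1),
      ⌊(k : ℝ) * β + ρ⌋ = ⌊(k : ℝ) * α + ρ⌋ := by
    rw [Finset.eventually_all]
    intro k _
    have hcont : Tendsto (fun β : ℝ => (k : ℝ) * β + ρ) (𝓝[>] α) (𝓝 ((k : ℝ) * α + ρ)) :=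
      (by fun_prop : Continuous fun β : ℝ => (k : ℝ) * β + ρ).continuousAt.mono_left
        nhdsWithin_le_nhds
    filter_upwards [hcont.eventually_lt_const (Int.lt_floor_add_one _), self_mem_nhdsWithin]
      with β h1 h2
    rw [Int.floor_eq_iff]
    have h3 : (k : ℝ) * α ≤ k * β := mul_le_mul_of_nonneg_left (le_of_lt h2) (Nat.cast_nonneg k)
    exact ⟨by linarith [Int.floor_le ((k : ℝ) * α + ρ)], h1⟩
  obtain ⟨u, hu, hsub⟩ := (mem_nhdsGT_iff_exists_Ioo_subset' hα.2).1 hev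
  obtain ⟨β, hirr, hβ1, hβ2⟩ := exists_irrational_btwn (lt_min (Set.mem_Ioi.1 hu) hα.2)
  have hβ := hsub ⟨hβ1, hβ2.trans_le (min_le_left _ _)⟩
  refine ⟨β, ⟨hα.1.trans hβ1, hβ2.trans_le (min_le_right _ _)⟩, hirr, fun k hk => ?_⟩
  have h1 := hβ k (by simp; omega)
  have h2 := hβ (k + 1) (by simp; omega)
  push_cast at h2
  rw [h1, h2]
  exact h k hk

/-- A binary word is a factor of some Sturmian infinite word iff it is defined by
some line `y = αx + ρ` with `α, ρ ∈ (0,1)`. -/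
theorem factor_of_sturmian_iff (w : List Bool) :
    (∃ ω : ℕ → Bool, IsSturmian ω ∧ IsFactor w ω) ↔
      ∃ α ρ : ℝ, α ∈ Set.Ioo (0 : ℝ) 1 ∧ ρ ∈ Set.Ioo (0 : ℝ) 1 ∧
        DefinesWord α ρ w := by
  constructor
  · rintro ⟨ω, hω, hw⟩
    exact hω.isBalanced.exists_definesWord hw
  · rintro ⟨α, ρ, hα, -, h⟩
    obtain ⟨β, hβ, hirr, hw⟩ := exists_irrational_definesWord hα h
    refine ⟨mechanicalWord β ρ, isSturmian_mechanicalWord hβ hirr ρ, 0, fun k hk => ?_⟩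
    have := (hw k hk).trans (ite_mechanicalWord hβ ρ k).symm
    rw [zero_add]
    generalize w.get ⟨k, hk⟩ = c at this ⊢
    cases c <;> cases h : mechanicalWord β ρ k <;> simp [h] at this ⊢
end
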